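/- arXiv:2105.10677 — 5 statements merged into one kernel-verified Lean document; each statement's English description precedes it below -/
import Mathlib

section
/- Let D be a regular domain and let a_s, a_t ∈ A ∖ {a_1, a_m} be alternatives with a_s ≈ a_t. If some vertex-path of Π(a_1, a_m) contains a_t, then there exists a vertex-path of Π(a_1, a_m) that contains a_s. -/
open Finset

noncomputable section

/-- A preference is a linear order over the `m` alternatives, represented as a bijection
from rank positions (0-based: position `0` is the top) to alternatives. -/
abbrev Pref (m : ℕ) := Fin m ≃ Fin m

namespace PFBRPaper

variable {m n : ℕ}

/-- `a` is strictly preferred to `b` under `P`. -/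
def Prefers (P : Pref m) (a b : Fin m) : Prop := P.symm a < P.symm b

/-- The last alternative `a_m` (0-based index `m-1`). -/
def lastAlt (m : ℕ) [NeZero m] : Fin m :=
  ⟨m - 1, Nat.sub_lt (Nat.pos_of_ne_zero (NeZero.ne m)) Nat.one_pos⟩

/-- Every alternative is top-ranked by some preference in the domain. -/
def MinimallyRich [NeZero m] (D : Set (Pref m)) : Prop :=
  ∀ a : Fin m, ∃ P ∈ D, P 0 = a

/-- The preference ranking `a_m` first, ..., `a_1` last. -/
def revPref (m : ℕ) : Pref m :=
  ⟨Fin.rev, Fin.rev, fun i => Fin.rev_rev i, fun i => Fin.rev_rev i⟩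

/-- Diversity, with the labeling convention: the domain contains the preference ranking
`a_1` first, `a_2` second, ..., `a_m` last (the identity), together with its
complete reversal. -/
def Diversity (D : Set (Pref m)) : Prop :=
  Equiv.refl (Fin m) ∈ D ∧ revPref m ∈ D

/-- Two preferences are adjacent: the alternatives at two contiguous rank positions are
swapped and everything else is unchanged. -/
def Adjacent (P P' : Pref m) : Prop :=
  P ≠ P' ∧ ∃ k : ℕ, ∃ hk : k + 1 < m,
    P ⟨k, Nat.lt_of_succ_lt hk⟩ = P' ⟨k + 1, hk⟩ ∧
    P ⟨k + 1, hk⟩ = P' ⟨k, Nat.lt_of_succ_lt hk⟩ ∧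
    ∀ l : Fin m, (l : ℕ) ≠ k → (l : ℕ) ≠ k + 1 → P l = P' l

/-- `π 0, …, π (v-1)` is a path in `D` connecting `P` and `P'`. -/
def IsPath (D : Set (Pref m)) (P P' : Pref m) (π : ℕ → Pref m) (v : ℕ) : Prop :=
  1 ≤ v ∧ (∀ i < v, π i ∈ D) ∧
  (∀ i < v, ∀ j < v, π i = π j → i = j) ∧
  π 0 = P ∧ π (v - 1) = P' ∧
  ∀ i, i + 1 < v → Adjacent (π i) (π (i + 1))

/-- The path `π 0, …, π (v-1)` has no `{a,b}`-restoration: the relative ranking of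
`a` and `b` switches at most once along the path. -/
def NoRestoration (π : ℕ → Pref m) (v : ℕ) (a b : Fin m) : Prop :=
  ∀ i j k : ℕ, i < j → j < k → k < v →
    ¬(Prefers (π i) a b ∧ Prefers (π j) b a ∧ Prefers (π k) a b) ∧
    ¬(Prefers (π i) b a ∧ Prefers (π j) a b ∧ Prefers (π k) b a)

def NoRestorationDomain (D : Set (Pref m)) : Prop :=
  ∀ P ∈ D, ∀ P' ∈ D, P ≠ P' → ∀ a b : Fin m,
    ∃ π v, IsPath D P P' π v ∧ NoRestoration π v a b

def RegularDomain [NeZero m] (D : Set (Pref m)) : Prop :=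
  MinimallyRich D ∧ Diversity D ∧ NoRestorationDomain D

/-- `a ≈ b`: the two alternatives are strongly connected in the domain `D`. -/
def StronglyConnected [NeZero m] (D : Set (Pref m)) (a b : Fin m) : Prop :=
  a ≠ b ∧ ∃ P ∈ D, ∃ P' ∈ D,
    P 0 = a ∧ P 1 = b ∧ P' 0 = b ∧ P' 1 = a ∧
    ∀ k : Fin m, 2 ≤ (k : ℕ) → P k = P' k

/-- `l` is a vertex-path of the graph `G_≈^B(D)`. -/
def IsVertexPathOn [NeZero m] (D : Set (Pref m)) (B : Set (Fin m)) (l : List (Fin m)) : Prop :=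
  l ≠ [] ∧ l.Nodup ∧ (∀ x ∈ l, x ∈ B) ∧ l.Chain' (StronglyConnected D)

/-- `l` is a vertex-path of `G_≈^B(D)` connecting `a` and `b`. -/
def VertexPathBetween [NeZero m] (D : Set (Pref m)) (B : Set (Fin m)) (a b : Fin m)
    (l : List (Fin m)) : Prop :=
  IsVertexPathOn D B l ∧ l.head? = some a ∧ l.getLast? = some b

/-- `a` is a leaf of the subgraph `G_≈^B(D)`. -/
def IsLeaf [NeZero m] (D : Set (Pref m)) (B : Set (Fin m)) (a : Fin m) : Prop :=
  a ∈ B ∧ ∃! b : Fin m, b ∈ B ∧ StronglyConnected D a b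

/-- Single-peakedness w.r.t. the natural order. -/
def SinglePeaked [NeZero m] (P : Pref m) : Prop :=
  ∀ a b : Fin m, ((a < b ∧ b < P 0) ∨ (P 0 < b ∧ b < a)) → Prefers P b a

/-- A `(p,q)`-hybrid preference (thresholds `p < q`, 0-based). -/
def IsHybridPref [NeZero m] (p q : Fin m) (P : Pref m) : Prop :=
  (∀ r s : Fin m, ((r ≤ p ∧ s ≤ p) ∨ (q ≤ r ∧ q ≤ s)) →
      ((r < s ∧ s < P 0) ∨ (P 0 < s ∧ s < r)) → Prefers P s r) ∧
  (P 0 ≤ p → ∀ l : Fin m, p ≤ l → l ≤ q → l ≠ p → Prefers P p l) ∧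
  (q ≤ P 0 → ∀ l : Fin m, p ≤ l → l ≤ q → l ≠ q → Prefers P q l)

/-- The `(p,q)`-hybrid domain of all `(p,q)`-hybrid preferences. -/
def hybridDomain [NeZero m] (p q : Fin m) : Set (Pref m) := {P | IsHybridPref p q P}

/-- `D` is a `(p,q)`-hybrid* domain. -/
def IsHybridStar [NeZero m] (D : Set (Pref m)) (p q : Fin m) : Prop :=
  D ⊆ hybridDomain p q ∧
  (∀ k : Fin m, k ≠ 0 → k ≠ lastAlt m →
      ∃ l, VertexPathBetween D Set.univ 0 (lastAlt m) l ∧ k ∈ l) ∧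
  ((p : ℕ) + 1 < (q : ℕ) → ∀ a : Fin m, ¬ IsLeaf D (Set.Icc p q) a)

/-- A lottery over the alternatives. -/
def Lottery (m : ℕ) : Type :=
  {f : Fin m → ℝ // (∀ a, 0 ≤ f a) ∧ ∑ a, f a = 1}

/-- The probability that a lottery assigns to a set of alternatives. -/
def Lottery.prob (lam : Lottery m) (B : Finset (Fin m)) : ℝ := ∑ a ∈ B, lam.1 a

/-- The support of a lottery. -/
def Lottery.supp (lam : Lottery m) : Finset (Fin m) :=
  Finset.univ.filter (fun a => 0 < lam.1 a)

/-- The degenerate lottery on `a`. -/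
def degLottery (a : Fin m) : Lottery m :=
  ⟨fun b => if b = a then 1 else 0,
   fun b => by by_cases h : b = a <;> simp [h],
   by simp⟩

/-- A profile of preferences drawn from the domain `D`. -/
abbrev Profile (D : Set (Pref m)) (n : ℕ) := Fin n → D

/-- The top-ranked alternative of a preference in the domain. -/
def topOf [NeZero m] {D : Set (Pref m)} (P : D) : Fin m := P.1 0

def Unanimous [NeZero m] {D : Set (Pref m)} (φ : Profile D n → Lottery m) : Prop :=
  ∀ (P : Profile D n) (a : Fin m), (∀ i, topOf (P i) = a) → φ P = degLottery a

/-- The total probability of the `k` top-ranked alternatives of `P` under `lam`. -/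
def topSum (lam : Lottery m) (P : Pref m) (k : ℕ) : ℝ :=
  ∑ t ∈ Finset.univ.filter (fun t : Fin m => (t : ℕ) < k), lam.1 (P t)

/-- Strategy-proofness: truth-telling first-order stochastically dominates any unilateral
misrepresentation. -/
def StrategyProof {D : Set (Pref m)} (φ : Profile D n → Lottery m) : Prop :=
  ∀ (i : Fin n) (P : Profile D n) (Pi' : D) (k : ℕ), k ≤ m →
    topSum (φ (Function.update P i Pi')) (P i).1 k ≤ topSum (φ P) (P i).1 k

def TopsOnly [NeZero m] {D : Set (Pref m)} (φ : Profile D n → Lottery m) : Prop :=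
  ∀ P P' : Profile D n, (∀ i, topOf (P i) = topOf (P' i)) → φ P = φ P'

def Anonymous {D : Set (Pref m)} (φ : Profile D n → Lottery m) : Prop :=
  ∀ (P : Profile D n) (σ : Equiv.Perm (Fin n)), φ (P ∘ σ) = φ P

/-- The interval `[a_k, a_m]`. -/
def upSet (k : Fin m) : Finset (Fin m) := Finset.univ.filter (fun a => k ≤ a)

/-- The interval `[a_1, a_k]`. -/
def downSet (k : Fin m) : Finset (Fin m) := Finset.univ.filter (fun a => a ≤ k)

/-- The interval `[a_p, a_q]`. -/
def midSet (p q : Fin m) : Finset (Fin m) := Finset.univ.filter (fun a => p ≤ a ∧ a ≤ q)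

/-- `S(k,P)`: the voters whose preference top is not to the left of `a_k`. -/
def voterSet [NeZero m] {D : Set (Pref m)} (P : Profile D n) (k : Fin m) : Finset (Fin n) :=
  Finset.univ.filter (fun i => k ≤ topOf (P i))

/-- `β_{S(k,P)}([a_k, a_m])`, with the convention that it is `0` for `k = m`. -/
def tailProb [NeZero m] {D : Set (Pref m)} (β : Finset (Fin n) → Lottery m)
    (P : Profile D n) (k : ℕ) : ℝ :=
  if h : k < m then (β (voterSet P ⟨k, h⟩)).prob (upSet ⟨k, h⟩) else 0

def BallotUnanimity [NeZero m] (β : Finset (Fin n) → Lottery m) : Prop :=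
  β Finset.univ = degLottery (lastAlt m) ∧ β ∅ = degLottery 0

def BallotMonotone (β : Finset (Fin n) → Lottery m) : Prop :=
  ∀ S T : Finset (Fin n), S ⊂ T →
    ∀ k : Fin m, (β S).prob (upSet k) ≤ (β T).prob (upSet k)

/-- `φ` is a probabilistic fixed ballot rule with probabilistic ballots `β`. -/
def IsPFBRWith [NeZero m] {D : Set (Pref m)} (φ : Profile D n → Lottery m)
    (β : Finset (Fin n) → Lottery m) : Prop :=
  BallotUnanimity β ∧ BallotMonotone β ∧
  ∀ (P : Profile D n) (k : Fin m),
    (φ P).1 k = tailProb β P (k : ℕ) - tailProb β P ((k : ℕ) + 1)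

def IsPFBR [NeZero m] {D : Set (Pref m)} (φ : Profile D n → Lottery m) : Prop :=
  ∃ β, IsPFBRWith φ β

/-- The constrained random-dictatorship condition w.r.t. `a_p` and `a_q`. -/
def ConstrainedRD (p q : Fin m) (β : Finset (Fin n) → Lottery m) : Prop :=
  ∃ ε : Fin n → ℝ, (∀ i, 0 ≤ ε i) ∧ ∑ i, ε i = 1 ∧
    ∀ S : Finset (Fin n),
      (β S).prob (upSet q) = ∑ i ∈ S, ε i ∧
      (β S).prob (downSet p) = ∑ i ∈ Sᶜ, ε i

/-- The constrained random-dictatorship condition w.r.t. `a_p` and `a_q` with every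
conditional dictatorial coefficient equal to `1/n`. -/
def ConstrainedRDUniform (p q : Fin m) (β : Finset (Fin n) → Lottery m) : Prop :=
  ∀ S : Finset (Fin n),
    (β S).prob (upSet q) = (S.card : ℝ) / (n : ℝ) ∧
    (β S).prob (downSet p) = ((Sᶜ : Finset (Fin n)).card : ℝ) / (n : ℝ)

/-- Anonymity at the level of probabilistic ballots. -/
def BallotAnonymous (β : Finset (Fin n) → Lottery m) : Prop :=
  ∀ S S' : Finset (Fin n), S.Nonempty → S'.Nonempty → S.card = S'.card → β S = β S'

/-- Per-capita monotonicity w.r.t. `a_p` and `a_q`. -/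
def PerCapitaMonotone (p q : Fin m) (β : Finset (Fin n) → Lottery m) : Prop :=
  ∀ S S' : Finset (Fin n), S.Nonempty → S ⊂ S' → S' ⊂ Finset.univ →
    (∀ t : Fin m, q ≤ t →
      (β S).prob (upSet t) / (S.card : ℝ) ≤ (β S').prob (upSet t) / (S'.card : ℝ)) ∧
    (∀ s : Fin m, s ≤ p →
      (β Sᶜ).prob (downSet s) / (S.card : ℝ) ≤ (β S'ᶜ).prob (downSet s) / (S'.card : ℝ))

/-- Decomposability: `φ` is a mixture of finitely many unanimous and strategy-proof
deterministic social choice functions. -/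
def Decomposable [NeZero m] {D : Set (Pref m)} (φ : Profile D n → Lottery m) : Prop :=
  ∃ (r : ℕ) (f : Fin r → (Profile D n → Fin m)) (α : Fin r → ℝ),
    (∀ k, 0 < α k) ∧ ∑ k, α k = 1 ∧
    (∀ k, Unanimous (fun P => degLottery (f k P)) ∧
          StrategyProof (fun P => degLottery (f k P))) ∧
    ∀ (P : Profile D n) (a : Fin m),
      (φ P).1 a = ∑ k, α k * (if f k P = a then 1 else 0)

/-- `b̂_S^R`: the `≺`-minimum of `supp(β_S) ∩ R` (with the convention `b̂_N^R = a_m`). -/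
def bR [NeZero m] (β : Finset (Fin n) → Lottery m) (q : Fin m) (S : Finset (Fin n)) : Fin m :=
  if h : ((β S).supp ∩ upSet q).Nonempty then ((β S).supp ∩ upSet q).min' h else lastAlt m

/-- `b̂_S^L`: the `≺`-maximum of `supp(β_S) ∩ L` (with the convention `b̂_∅^L = a_1`). -/
def bL [NeZero m] (β : Finset (Fin n) → Lottery m) (p : Fin m) (S : Finset (Fin n)) : Fin m :=
  if h : ((β S).supp ∩ downSet p).Nonempty then ((β S).supp ∩ downSet p).max' h else 0

/-- `α = min over nonempty S ⊂ N of min(β_S(b̂_S^R)/|S|, β_S(b̂_S^L)/(n-|S|))`. -/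
def alphaVal [NeZero m] (β : Finset (Fin n) → Lottery m) (p q : Fin m) : ℝ :=
  sInf {x : ℝ | ∃ S : Finset (Fin n), S.Nonempty ∧ S ≠ Finset.univ ∧
    x = min ((β S).1 (bR β q S) / (S.card : ℝ))
            ((β S).1 (bL β p S) / ((n : ℝ) - (S.card : ℝ)))}

/-- `γ_S = (|S|/n) e_{b̂_S^R} + ((n-|S|)/n) e_{b̂_S^L}`, pointwise. -/
def gammaFun [NeZero m] (β : Finset (Fin n) → Lottery m) (p q : Fin m)
    (S : Finset (Fin n)) (a : Fin m) : ℝ :=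
  ((S.card : ℝ) / (n : ℝ)) * (if a = bR β q S then 1 else 0)
  + (((n : ℝ) - (S.card : ℝ)) / (n : ℝ)) * (if a = bL β p S then 1 else 0)

/-- The max-min formula `f(P) = max_{S ⊆ N} min({r_1(P_j) : j ∈ S} ∪ {b_S})`. -/
def fbrOutcome [NeZero m] {D : Set (Pref m)} (b : Finset (Fin n) → Fin m)
    (P : Profile D n) : Fin m :=
  Finset.univ.sup' Finset.univ_nonempty
    (fun S : Finset (Fin n) =>
      (insert (b S) (S.image (fun j => topOf (P j)))).inf' (Finset.insert_nonempty _ _) id)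

/-- `f` is a `(p,q)`-fixed ballot rule with deterministic ballots `b` and constrained
dictator `i`. -/
def IsFBRWith [NeZero m] {D : Set (Pref m)} (p q : Fin m) (f : Profile D n → Fin m)
    (b : Finset (Fin n) → Fin m) (i : Fin n) : Prop :=
  b Finset.univ = lastAlt m ∧ b ∅ = 0 ∧
  (∀ S T : Finset (Fin n), S ⊂ T → b S ≤ b T) ∧
  (∀ S : Finset (Fin n), (i ∈ S → q ≤ b S) ∧ (i ∉ S → b S ≤ p)) ∧
  ∀ P : Profile D n, f P = fbrOutcome b P

end PFBRPaper

open PFBRPaper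

theorem sc_symm' {m : ℕ} [NeZero m] {D : Set (Pref m)} {a b : Fin m}
    (h : StronglyConnected D a b) : StronglyConnected D b a := by
  obtain ⟨hne, P, hP, P', hP', h1, h2, h3, h4, h5⟩ := h
  exact ⟨hne.symm, P', hP', P, hP, h3, h4, h1, h2, fun k hk => (h5 k hk).symm⟩

theorem adj_sc {m : ℕ} [NeZero m] (hm : 3 ≤ m) {D : Set (Pref m)} {P P' : Pref m}
    (hP : P ∈ D) (hP' : P' ∈ D) (h : Adjacent P P') (hne : P 0 ≠ P' 0) :
    StronglyConnected D (P 0) (P' 0) := by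
  obtain ⟨_, k, hk, h1, h2, h3⟩ := h
  have hz : ((0 : Fin m) : ℕ) = 0 := by simp
  have ho : ((1 : Fin m) : ℕ) = 1 := by
    rw [Fin.val_one']; exact Nat.mod_eq_of_lt (by omega)
  have hk0 : k = 0 := by
    by_contra hk0
    exact hne (h3 0 (by rw [hz]; omega) (by rw [hz]; omega))
  subst hk0
  have e0 : (⟨0, Nat.lt_of_succ_lt hk⟩ : Fin m) = 0 := Fin.ext hz.symm
  have e1 : (⟨0 + 1, hk⟩ : Fin m) = 1 := Fin.ext ho.symm
  rw [e0, e1] at h1 h2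
  exact ⟨hne, P, hP, P', hP', rfl, h2, rfl, h1.symm,
    fun l hl => h3 l (by omega) (by omega)⟩

theorem exists_fan {α : Type*} {R : α → α → Prop} (l : List α) (t : α) {x y0 : α}
    (hw : Relation.ReflTransGen (fun x y => R x y ∧ y ≠ t) x y0) (hy0 : y0 ∈ l) :
    x ∉ l → ∃ (p : List α) (y : α), (x :: p).Nodup ∧ (x :: p ++ [y]).IsChain R ∧
      (∀ z ∈ x :: p, z ∉ l) ∧ y ∈ l ∧ y ≠ t := by
  induction hw using Relation.ReflTransGen.head_induction_on with
  | refl => intro h; exact absurd hy0 h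
  | head hxx' hrest ih =>
    rename_i x x'
    intro hx
    by_cases hx' : x' ∈ l
    · exact ⟨[], x', by simp, by simpa using hxx'.1, by simpa using hx, hx', hxx'.2⟩
    · obtain ⟨p, y, h1, h2, h3, h4, h5⟩ := ih hx'
      by_cases hxp : x ∈ x' :: p
      · obtain ⟨u, v, huv⟩ := List.append_of_mem hxp
        refine ⟨v, y, ?_, ?_, ?_, h4, h5⟩
        · rw [huv] at h1; exact (List.nodup_append.1 h1).2.1
        · rw [huv, List.append_assoc] at h2
          exact h2.right_of_append
        · intro z hz; apply h3; rw [huv]; exact List.mem_append_right _ hz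
      · refine ⟨x' :: p, y, List.nodup_cons.2 ⟨hxp, h1⟩, ?_, ?_, h4, h5⟩
        · simpa using ⟨hxx'.1, h2⟩
        · intro z hz
          rcases List.mem_cons.1 hz with rfl | hz
          · exact hx
          · exact h3 z hz

theorem splice {m : ℕ} [NeZero m] {D : Set (Pref m)} {a b s t y0 : Fin m} {l : List (Fin m)}
    (hl : VertexPathBetween D Set.univ a b l) (ht : t ∈ l) (hst : StronglyConnected D s t)
    (hy0 : y0 ∈ l)
    (hw : Relation.ReflTransGen (fun x y => StronglyConnected D x y ∧ y ≠ t) s y0) :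
    ∃ l, VertexPathBetween D Set.univ a b l ∧ s ∈ l := by
  by_cases hs : s ∈ l
  · exact ⟨l, hl, hs⟩
  obtain ⟨p, y, h1, h2, h3, h4, h5⟩ := exists_fan l t hw hy0 hs
  obtain ⟨⟨hne, hnd, -, hch⟩, hh, hlast⟩ := hl
  have hch : l.IsChain (StronglyConnected D) := hch
  obtain ⟨l1, l2, rfl⟩ := List.append_of_mem ht
  rcases List.mem_append.1 h4 with hy | hy
  · obtain ⟨l3, l4, rfl⟩ := List.append_of_mem hy
    have hrev : (y :: (s :: p).reverse).IsChain (StronglyConnected D) := by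
      have : (s :: p ++ [y]).reverse.IsChain (StronglyConnected D) := by
        rw [List.isChain_reverse]
        exact h2.imp (fun _ _ h => sc_symm' h)
      simpa using this
    refine ⟨l3 ++ (y :: (s :: p).reverse) ++ t :: l2, ⟨⟨by simp, ?_, by simp, ?_⟩, ?_, ?_⟩, by simp⟩
    · have hsub : (l3 ++ y :: (t :: l2)).Nodup := by
        refine hnd.sublist ?_
        simp
      have hd : ∀ z ∈ s :: p, z ∉ l3 ++ y :: (t :: l2) := by
        intro z hz hz'
        apply h3 z hz
        simp at hz' ⊢
        tauto
      have : (l3 ++ y :: (t :: l2) ++ (s :: p)).Nodup := by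
        rw [List.nodup_append']
        exact ⟨hsub, h1, fun z hz hz' => hd z hz' hz⟩
      refine (List.Perm.nodup_iff ?_).1 this
      rw [List.perm_iff_count]
      intro z
      simp [List.count_append, List.count_cons]
      omega
    · have c1 : (l3 ++ [y]).IsChain (StronglyConnected D) := by
        have : ((l3 ++ [y]) ++ (l4 ++ t :: l2)).IsChain (StronglyConnected D) := by simpa using hch
        exact this.left_of_append
      have c2 : (t :: l2).IsChain (StronglyConnected D) := hch.right_of_append
      have c3 : ((y :: (s :: p).reverse) ++ t :: l2).IsChain (StronglyConnected D) := by
        refine hrev.append c2 ?_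
        intro u hu v hv
        simp only [List.reverse_cons, ← List.cons_append, List.getLast?_concat, Option.mem_def, Option.some.injEq, List.head?_cons] at hu hv
        subst hu hv
        exact hst
      have : ((l3 ++ [y]) ++ ((s :: p).reverse ++ t :: l2)).IsChain (StronglyConnected D) := by
        rw [List.append_assoc]
        exact List.isChain_split.2 ⟨c1, c3⟩
      change List.IsChain _ _
      simpa using this
    · cases l3 <;> simp_all
    · rw [List.getLast?_append_of_ne_nil _ (by simp)] at hlast ⊢
      exact hlast
  · have hy' : y ∈ l2 := by
      rcases List.mem_cons.1 hy with h | h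
      · exact absurd h h5
      · exact h
    obtain ⟨l3, l4, rfl⟩ := List.append_of_mem hy'
    refine ⟨l1 ++ (t :: s :: p) ++ y :: l4, ⟨⟨by simp, ?_, by simp, ?_⟩, ?_, ?_⟩, by simp⟩
    · have hsub : (l1 ++ t :: (y :: l4)).Nodup := by
        refine hnd.sublist ?_
        simp
      have hd : ∀ z ∈ s :: p, z ∉ l1 ++ t :: (y :: l4) := by
        intro z hz hz'
        apply h3 z hz
        simp at hz' ⊢
        tauto
      have : (l1 ++ t :: (y :: l4) ++ (s :: p)).Nodup := by
        rw [List.nodup_append']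
        exact ⟨hsub, h1, fun z hz hz' => hd z hz' hz⟩
      refine (List.Perm.nodup_iff ?_).1 this
      rw [List.perm_iff_count]
      intro z
      simp [List.count_append, List.count_cons]
      omega
    · have c1 : (l1 ++ [t]).IsChain (StronglyConnected D) := by
        have : ((l1 ++ [t]) ++ (l3 ++ y :: l4)).IsChain (StronglyConnected D) := by simpa using hch
        exact this.left_of_append
      have c2 : (y :: l4).IsChain (StronglyConnected D) := by
        have : ((l1 ++ t :: l3) ++ (y :: l4)).IsChain (StronglyConnected D) := by simpa using hch
        exact this.right_of_append
      have c3 : ((s :: p) ++ y :: l4).IsChain (StronglyConnected D) :=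
        List.isChain_split.2 ⟨h2, c2⟩
      have c4 : (t :: ((s :: p) ++ y :: l4)).IsChain (StronglyConnected D) := by
        simpa using ⟨sc_symm' hst, c3⟩
      have := List.isChain_split.2 ⟨c1, c4⟩
      change List.IsChain _ _
      simpa using this
    · cases l1 <;> simp_all
    · have e : l1 ++ t :: (l3 ++ y :: l4) = (l1 ++ t :: l3) ++ y :: l4 := by simp
      rw [e, List.getLast?_append_of_ne_nil _ (by simp)] at hlast
      rw [List.getLast?_append_of_ne_nil _ (by simp)]
      exact hlast

theorem walk_avoid {m : ℕ} [NeZero m] (hm : 3 ≤ m) {D : Set (Pref m)}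
    (hN : NoRestorationDomain D) {s t : Fin m} (hne : s ≠ t) {Q T : Pref m}
    (hQ : Q ∈ D) (hT : T ∈ D) (hQs : Q 0 = s) (hTs : T 0 ≠ s) (hTst : Prefers T s t) :
    Relation.ReflTransGen (fun x y => StronglyConnected D x y ∧ y ≠ t) s (T 0) := by
  have hQT : Q ≠ T := by rintro rfl; exact hTs hQs
  obtain ⟨π, v, ⟨hv, hin, -, hp0, hpv, hadj⟩, hnr⟩ := hN Q hQ T hT hQT s t
  have top : ∀ (P : Pref m) (a b : Fin m), a ≠ b → P 0 = a → Prefers P a b := by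
    intro P a b hab h
    unfold Prefers
    have h0 : P.symm a = 0 := by rw [← h]; simp
    rw [h0]
    apply Fin.pos_iff_ne_zero.2
    intro hb
    apply hab
    apply P.symm.injective
    rw [h0, hb]
  have hnt : ∀ i < v, π i 0 ≠ t := by
    intro i hi h
    have hts : Prefers (π i) t s := top _ _ _ hne.symm h
    have hi0 : i ≠ 0 := by
      rintro rfl
      rw [hp0, hQs] at h; exact hne h
    have hiv : i ≠ v - 1 := by
      rintro rfl
      rw [hpv] at hts
      exact absurd hts (not_lt.2 (le_of_lt hTst))
    refine (hnr 0 i (v - 1) (by omega) (by omega) (by omega)).1 ⟨?_, hts, ?_⟩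
    · rw [hp0]; exact top _ _ _ hne hQs
    · rw [hpv]; exact hTst
  have key : ∀ i < v, Relation.ReflTransGen
      (fun x y => StronglyConnected D x y ∧ y ≠ t) s (π i 0) := by
    intro i
    induction i with
    | zero => intro _; rw [hp0, hQs]
    | succ i ih =>
      intro hi
      by_cases he : π i 0 = π (i + 1) 0
      · rw [← he]; exact ih (by omega)
      · exact (ih (by omega)).tail
          ⟨adj_sc hm (hin i (by omega)) (hin _ hi) (hadj i hi) he, hnt _ hi⟩
  have := key (v - 1) (by omega)
  rwa [hpv] at this

/-- If `s ≈ t` for interior alternatives `s, t` and some vertex-path of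
`Π(a_1, a_m)` contains `t`, then some vertex-path of `Π(a_1, a_m)` contains `s`. -/
theorem one_step (m : ℕ) [NeZero m] (hm : 3 ≤ m)
    (D : Set (Pref m)) (hD : RegularDomain D)
    (s t : Fin m) (hs0 : s ≠ 0) (hsm : s ≠ lastAlt m)
    (ht0 : t ≠ 0) (htm : t ≠ lastAlt m)
    (hst : StronglyConnected D s t)
    (h : ∃ l, VertexPathBetween D Set.univ 0 (lastAlt m) l ∧ t ∈ l) :
    ∃ l, VertexPathBetween D Set.univ 0 (lastAlt m) l ∧ s ∈ l := by
  obtain ⟨hR, ⟨hd1, hd2⟩, hN⟩ := hD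
  obtain ⟨l, hl, ht⟩ := h
  obtain ⟨Q, hQ, hQs⟩ := hR s
  have hrev0 : revPref m 0 = lastAlt m := by
    apply Fin.ext
    change ((Fin.rev (0 : Fin m) : Fin m) : ℕ) = m - 1
    rw [Fin.val_rev]; simp
  rcases lt_or_gt_of_ne hst.1 with hlt | hlt
  · refine splice hl ht hst (y0 := 0) ?_
      (walk_avoid hm hN hst.1 hQ hd1 hQs (fun h => hs0 h.symm) hlt)
    exact List.mem_of_mem_head? hl.2.1
  · have hpr : Prefers (revPref m) s t := Fin.rev_lt_rev.2 hlt
    have hw := walk_avoid hm hN hst.1 hQ hd2 hQs (by rw [hrev0]; exact fun h => hsm h.symm) hpr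
    rw [hrev0] at hw
    exact splice hl ht hst (List.mem_of_mem_getLast? hl.2.2) hw
end
end

section
/- Let D be a regular domain. For every alternative a_s ∈ A ∖ {a_1, a_m} there exists a vertex-path of Π(a_1, a_m) that contains a_s. -/
open Finset

noncomputable section

namespace PFBRAux

variable {α : Type*}

theorem ear_aux {R S : α → α → Prop} (hSR : ∀ x y, S x y → R x y) (l : List α) {s t : α}
    (h : Relation.ReflTransGen S s t) (ht : t ∈ l) (hs : s ∉ l) :
    ∃ q c, (s :: q ++ [c]).IsChain R ∧ (s :: q).Nodup ∧ (∀ x ∈ s :: q, x ∉ l) ∧ c ∈ l ∧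
      ∃ x, S x c := by
  classical
  induction h using Relation.ReflTransGen.head_induction_on with
  | refl => exact absurd ht hs
  | @head a b hab _ ih =>
    by_cases hb : b ∈ l
    · exact ⟨[], b, by simpa using hSR _ _ hab, by simp, by simpa using hs, hb, a, hab⟩
    · obtain ⟨q, c, h1, h2, h3, h4, h5⟩ := ih hb
      by_cases ha : a ∈ b :: q
      · obtain ⟨q1, q2, hq⟩ := List.append_of_mem ha
        rw [hq] at h1 h2 h3
        refine ⟨q2, c, ?_, ?_, ?_, h4, h5⟩
        · rw [List.append_assoc] at h1
          exact h1.right_of_append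
        · exact (List.nodup_append.1 h2).2.1
        · intro x hx
          exact h3 x (by simp at hx ⊢; tauto)
      · refine ⟨b :: q, c, ?_, ?_, ?_, h4, h5⟩
        · exact List.IsChain.cons_cons (hSR _ _ hab) h1
        · exact List.nodup_cons.2 ⟨ha, h2⟩
        · intro x hx
          rcases List.mem_cons.1 hx with rfl | hx
          · exact hs
          · exact h3 x hx

def VP (R : α → α → Prop) (u v : α) (l : List α) : Prop :=
  l.Nodup ∧ l.IsChain R ∧ l.head? = some u ∧ l.getLast? = some v

theorem nodup_aux {x y z r : List α} {c b : α} (h : (x ++ c :: y ++ b :: z).Nodup)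
    (hr : r.Nodup) (hd : ∀ a ∈ r, a ∉ x ++ c :: y ++ b :: z) :
    (x ++ (c :: (r ++ (b :: z)))).Nodup := by
  have hsub : (x ++ c :: b :: z).Sublist (x ++ c :: y ++ b :: z) := by
    simp
  have h1 := h.sublist hsub
  have hd' : List.Disjoint r (x ++ c :: b :: z) := fun a ha hb => hd a ha (hsub.subset hb)
  have h2 : (r ++ (x ++ c :: b :: z)).Nodup := hr.append h1 hd'
  refine (List.Perm.nodup_iff ?_).1 h2
  have e : x ++ (c :: (r ++ (b :: z))) = (x ++ [c]) ++ (r ++ (b :: z)) := by simp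
  have e2 : r ++ (x ++ c :: b :: z) = r ++ ((x ++ [c]) ++ (b :: z)) := by simp
  rw [e, e2, ← List.append_assoc r, ← List.append_assoc (x ++ [c])]
  exact List.perm_append_comm.append_right _

theorem ear {R : α → α → Prop} (hR : ∀ x y, R x y → R y x) {u v : α} {l : List α}
    (hl : VP R u v l) {b s t : α} (hb : b ∈ l) (hbs : R b s) (hs : s ∉ l) (ht : t ∈ l)
    (h : Relation.ReflTransGen (fun x y => R x y ∧ y ≠ b) s t) :
    ∃ l', VP R u v l' ∧ s ∈ l' := by
  obtain ⟨q, c, h1, h2, h3, h4, -, -, h5⟩ := ear_aux (R := R) (fun x y h => h.1) l h ht hs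
  obtain ⟨hn, hc, hu, hv⟩ := hl
  obtain ⟨l1, l2, rfl⟩ := List.append_of_mem hb
  have hc' : c ∈ l1 ∨ c ∈ l2 := by simp at h4; tauto
  rcases hc' with h6 | h6
  · obtain ⟨l3, l4, rfl⟩ := List.append_of_mem h6
    refine ⟨l3 ++ (c :: ((s :: q).reverse ++ (b :: l2))), ⟨?_, ?_, ?_, ?_⟩, by simp⟩
    · exact nodup_aux hn (List.nodup_reverse.2 h2) fun x hx => h3 x (List.mem_reverse.1 hx)
    · have e : (c :: ((s :: q).reverse ++ (b :: l2)))
          = (s :: q ++ [c]).reverse ++ (b :: l2) := by simp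
      have h1' : (s :: q ++ [c]).reverse.IsChain R :=
        List.isChain_reverse.2 (h1.imp fun x y h => hR x y h)
      have A : (c :: ((s :: q).reverse ++ (b :: l2))).IsChain R := by
        rw [e]
        refine List.IsChain.append h1' hc.right_of_append ?_
        intro x hx y hy
        rw [List.getLast?_reverse] at hx
        simp at hx hy
        subst hx; subst hy
        exact hR _ _ hbs
      rw [List.append_assoc] at hc
      refine List.IsChain.append hc.left_of_append A ?_
      intro x hx y hy
      exact (List.isChain_append.1 hc).2.2 x hx y (by simpa using hy)
    · simpa [List.head?_append] using hu
    · simpa [List.getLast?_append, List.getLast?_cons] using hv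
  · obtain ⟨l3, l4, rfl⟩ := List.append_of_mem h6
    refine ⟨l1 ++ (b :: ((s :: q) ++ (c :: l4))), ⟨?_, ?_, ?_, ?_⟩, by simp⟩
    · have e : l1 ++ b :: (l3 ++ c :: l4) = l1 ++ b :: l3 ++ c :: l4 := by simp
      rw [e] at hn h3
      exact nodup_aux hn h2 h3
    · have hc2 : (c :: l4).IsChain R := by
        have := hc.right_of_append
        rw [← List.cons_append] at this
        exact this.right_of_append
      have A : (s :: q ++ c :: l4).IsChain R := by
        have := List.isChain_append.1 h1
        refine List.IsChain.append this.1 hc2 ?_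
        intro x hx y hy
        exact this.2.2 x hx y (by simpa using hy)
      have B : (b :: ((s :: q) ++ (c :: l4))).IsChain R := List.IsChain.cons_cons hbs A
      refine List.IsChain.append hc.left_of_append B ?_
      intro x hx y hy
      exact (List.isChain_append.1 hc).2.2 x hx y (by simpa using hy)
    · simpa [List.head?_append] using hu
    · simpa [List.getLast?_append, List.getLast?_cons] using hv

theorem main_graph {R : α → α → Prop} (hR : ∀ x y, R x y → R y x) {u v : α} (huv : u ≠ v)
    (hc : Relation.ReflTransGen R u v)
    (H : ∀ s x, s ≠ x → Relation.ReflTransGen (fun a b => R a b ∧ b ≠ x) s u ∨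
      Relation.ReflTransGen (fun a b => R a b ∧ b ≠ x) s v)
    (s : α) (hs : Relation.ReflTransGen R s u) : ∃ l, VP R u v l ∧ s ∈ l := by
  induction hs using Relation.ReflTransGen.head_induction_on with
  | refl =>
    obtain ⟨q, c, h1, h2, h3, h4, -⟩ := ear_aux (R := R) (fun x y h => h) [v] hc
      (by simp) (by simpa using huv)
    obtain rfl : c = v := by simpa using h4
    refine ⟨u :: q ++ [c], ⟨?_, h1, by simp, by simp [List.getLast?_cons]⟩, by simp⟩
    refine List.nodup_append.2 ⟨h2, by simp, ?_⟩
    intro x hx y hy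
    have := h3 x hx
    simp at this hy
    subst hy
    exact this
  | @head a b hab _ ih =>
    obtain ⟨l, hl, hb⟩ := ih
    by_cases ha : a ∈ l
    · exact ⟨l, hl, ha⟩
    · have hne : a ≠ b := fun h => ha (h ▸ hb)
      rcases H a b hne with h | h
      · exact ear hR hl hb (hR _ _ hab) ha (List.mem_of_head? hl.2.2.1) h
      · exact ear hR hl hb (hR _ _ hab) ha (List.mem_of_getLast? hl.2.2.2) h

open PFBRPaper

variable {m : ℕ} [NeZero m]

theorem sc_symm {D : Set (Pref m)} (a b : Fin m) (h : StronglyConnected D a b) :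
    StronglyConnected D b a := by
  obtain ⟨h0, P, hP, Q, hQ, h1, h2, h3, h4, h5⟩ := h
  exact ⟨h0.symm, Q, hQ, P, hP, h3, h4, h1, h2, fun k hk => (h5 k hk).symm⟩

theorem sc_of_adj {D : Set (Pref m)} {P Q : Pref m} (hP : P ∈ D) (hQ : Q ∈ D)
    (h : Adjacent P Q) (hne : P 0 ≠ Q 0) : StronglyConnected D (P 0) (Q 0) := by
  obtain ⟨-, k, hk, h1, h2, h3⟩ := h
  by_cases h0 : k = 0
  · subst h0
    have e0 : (⟨0, Nat.lt_of_succ_lt hk⟩ : Fin m) = 0 := by ext; simp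
    have e1 : (⟨0 + 1, hk⟩ : Fin m) = 1 := by
      ext
      show 1 = 1 % m
      rw [Nat.mod_eq_of_lt (by omega)]
    rw [e0, e1] at h1 h2
    exact ⟨hne, P, hP, Q, hQ, rfl, h2, rfl, h1.symm, fun l hl => h3 l (by omega) (by omega)⟩
  · exact absurd (h3 0 (by simp; omega) (by simp)) hne

theorem avoid {D : Set (Pref m)} (hD : NoRestorationDomain D) {P Q : Pref m} (hP : P ∈ D)
    (hQ : Q ∈ D) {x : Fin m} (hx : P 0 ≠ x) (hpx : Prefers Q (P 0) x) :
    Relation.ReflTransGen (fun a b => StronglyConnected D a b ∧ b ≠ x) (P 0) (Q 0) := by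
  by_cases hPQ : P = Q
  · subst hPQ; exact .refl
  obtain ⟨π, v, ⟨hv, hmem, -, h0, h1, hadj⟩, hnr⟩ := hD P hP Q hQ hPQ (P 0) x
  have hP0 : Prefers P (P 0) x := by
    unfold Prefers
    rw [Equiv.symm_apply_apply]
    refine Fin.pos_iff_ne_zero.2 fun h => hx ?_
    rw [← h, Equiv.apply_symm_apply]
  have key : ∀ i < v, Prefers (π i) (P 0) x := by
    intro i hi
    by_contra hcon
    have h2 : Prefers (π i) x (P 0) := by
      unfold Prefers at hcon ⊢
      refine lt_of_le_of_ne (not_lt.1 hcon) fun h => hx ?_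
      exact ((π i).symm.injective h).symm
    have hi0 : i ≠ 0 := by rintro rfl; rw [h0] at hcon; exact hcon hP0
    have hi1 : i ≠ v - 1 := by rintro rfl; rw [h1] at hcon; exact hcon hpx
    refine (hnr 0 i (v - 1) (by omega) (by omega) (by omega)).1 ⟨?_, h2, ?_⟩
    · rwa [h0]
    · rwa [h1]
  have top : ∀ i < v, π i 0 ≠ x := by
    intro i hi h
    have := key i hi
    unfold Prefers at this
    rw [← h, Equiv.symm_apply_apply] at this
    exact absurd this (Fin.not_lt_zero _)
  have : ∀ i < v, Relation.ReflTransGen (fun a b => StronglyConnected D a b ∧ b ≠ x)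
      (P 0) (π i 0) := by
    intro i
    induction i with
    | zero => intro _; rw [h0]
    | succ i ih =>
      intro hi
      have := ih (by omega)
      by_cases he : π i 0 = π (i + 1) 0
      · rwa [← he]
      · exact this.tail ⟨sc_of_adj (hmem i (by omega)) (hmem _ hi) (hadj i hi) he, top _ hi⟩
  rw [← h1]
  exact this _ (by omega)

theorem rev_zero : revPref m 0 = lastAlt m := by
  ext; simp [revPref, lastAlt, Fin.val_rev]

theorem reach {D : Set (Pref m)} (hD : RegularDomain D) (s x : Fin m) :
    (s < x → Relation.ReflTransGen (fun a b => StronglyConnected D a b ∧ b ≠ x) s 0) ∧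
    (x < s → Relation.ReflTransGen (fun a b => StronglyConnected D a b ∧ b ≠ x) s (lastAlt m)) := by
  obtain ⟨hr, ⟨hi, hv⟩, hn⟩ := hD
  obtain ⟨P, hP, rfl⟩ := hr s
  constructor
  · intro h
    exact avoid hn hP hi h.ne h
  · intro h
    rw [← rev_zero]
    exact avoid hn hP hv h.ne' (Fin.rev_lt_rev.2 h)

end PFBRAux

open PFBRPaper

/-- In a regular domain, every interior alternative belongs to some
vertex-path of `Π(a_1, a_m)`. -/
theorem interior_on_main_path (m : ℕ) [NeZero m] (hm : 3 ≤ m)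
    (D : Set (Pref m)) (hD : RegularDomain D)
    (s : Fin m) (hs0 : s ≠ 0) (hsm : s ≠ lastAlt m) :
    ∃ l, VertexPathBetween D Set.univ 0 (lastAlt m) l ∧ s ∈ l := by
  obtain ⟨a, b⟩ := And.intro (PFBRAux.reach hD s (lastAlt m)) (PFBRAux.reach hD s 0)
  have hlast : s < lastAlt m := by
    refine lt_of_le_of_ne ?_ hsm
    rw [Fin.le_def]
    simp only [lastAlt]
    omega
  have hz : 0 < s := Fin.pos_iff_ne_zero.2 hs0
  have h1 : Relation.ReflTransGen (StronglyConnected D) s 0 :=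
    Relation.ReflTransGen.mono (fun _ _ h => And.left h) _ _ (a.1 hlast)
  have h2 : Relation.ReflTransGen (StronglyConnected D) s (lastAlt m) :=
    Relation.ReflTransGen.mono (fun _ _ h => And.left h) _ _ (b.2 hz)
  have h3 : Relation.ReflTransGen (StronglyConnected D) 0 (lastAlt m) :=
    haveI : Std.Symm (StronglyConnected D) := ⟨PFBRAux.sc_symm⟩
    ((Relation.ReflTransGen.stdSymm (r := StronglyConnected D)).symm _ _ h1).trans h2
  obtain ⟨l, ⟨hn, hc, hu, hv⟩, hsl⟩ := PFBRAux.main_graph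
    (R := StronglyConnected D) PFBRAux.sc_symm (hz.trans hlast).ne h3
    (fun t x htx => (lt_or_gt_of_ne htx).imp (PFBRAux.reach hD t x).1 (PFBRAux.reach hD t x).2)
    s h1
  exact ⟨l, ⟨⟨List.ne_nil_of_mem hsl, hn, fun _ _ => Set.mem_univ _, hc⟩, hu, hv⟩, hsl⟩
end
end

section
/- (Uncompromising property.) Let D be a domain of preferences over A and let φ : D^n → Δ(A) be a unanimous, tops-only and strategy-proof RSCF. Let {x_1, …, x_t} be a vertex-path of G_≈^A(D), let i ∈ N, let P_{-i} ∈ D^{n−1}, and let P_i, P_i′ ∈ D with r_1(P_i) = x_1 and r_1(P_i′) = x_t. Then φ_{a_s}(P_i, P_{-i}) = φ_{a_s}(P_i′, P_{-i}) for every alternative a_s ∉ {x_1, …, x_t}, and consequently Σ_{k=1}^{t} φ_{x_k}(P_i, P_{-i}) = Σ_{k=1}^{t} φ_{x_k}(P_i′, P_{-i}). -/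
open Finset

noncomputable section

open PFBRPaper

lemma topSum_succ {m : ℕ} (lam : Lottery m) (P : Pref m) (t : Fin m) :
    topSum lam P ((t : ℕ) + 1) = topSum lam P (t : ℕ) + lam.1 (P t) := by
  unfold topSum
  have : (Finset.univ.filter (fun s : Fin m => (s : ℕ) < (t : ℕ) + 1))
      = insert t (Finset.univ.filter (fun s : Fin m => (s : ℕ) < (t : ℕ))) := by
    ext s
    simp only [Finset.mem_filter, Finset.mem_univ, true_and, Finset.mem_insert, Fin.ext_iff]
    omega
  rw [this, Finset.sum_insert (by simp), add_comm]

lemma topSum_swap {m : ℕ} [NeZero m] (hm : 3 ≤ m) (lam : Lottery m) (P P' : Pref m)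
    (h0 : P 0 = P' 1) (h1 : P 1 = P' 0) (h : ∀ k : Fin m, 2 ≤ (k : ℕ) → P k = P' k)
    (d : ℕ) (hd : d + 2 ≤ m) : topSum lam P (d + 2) = topSum lam P' (d + 2) := by
  have hv1 : ((1 : Fin m) : ℕ) = 1 := by
    rw [Fin.val_one', Nat.mod_eq_of_lt (by omega)]
  have hv0 : ((0 : Fin m) : ℕ) = 0 := by simp
  induction d with
  | zero =>
    have e : ∀ Q : Pref m, topSum lam Q (0 + 2) = lam.1 (Q 0) + lam.1 (Q 1) := by
      intro Q
      have a1 := topSum_succ lam Q 1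
      have a0 := topSum_succ lam Q 0
      rw [hv1] at a1
      rw [hv0] at a0
      have z : topSum lam Q 0 = 0 := by simp [topSum]
      rw [z] at a0
      simp only [zero_add] at a0 ⊢
      rw [show (2 : ℕ) = 1 + 1 from rfl, a1, a0]
    rw [e, e, h0, h1, add_comm]
  | succ d ih =>
    have b := topSum_succ lam P ⟨d + 2, by omega⟩
    have b' := topSum_succ lam P' ⟨d + 2, by omega⟩
    have c := h ⟨d + 2, by omega⟩ (by simp)
    simp only at b b'
    rw [show d + 1 + 2 = d + 2 + 1 by omega, b, b', c, ih (by omega)]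

lemma step_sc {m n : ℕ} [NeZero m] (hm : 3 ≤ m) {D : Set (Pref m)}
    (φ : Profile D n → Lottery m) (hsp : StrategyProof φ) (i : Fin n) (P : Profile D n)
    (Q Q' : D) (h0 : Q.1 0 = Q'.1 1) (h1 : Q.1 1 = Q'.1 0)
    (h : ∀ k : Fin m, 2 ≤ (k : ℕ) → Q.1 k = Q'.1 k)
    (a : Fin m) (ha0 : a ≠ Q.1 0) (ha1 : a ≠ Q.1 1) :
    (φ (Function.update P i Q)).1 a = (φ (Function.update P i Q')).1 a := by
  have hv1 : ((1 : Fin m) : ℕ) = 1 := by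
    rw [Fin.val_one', Nat.mod_eq_of_lt (by omega)]
  have key : ∀ k, 2 ≤ k → k ≤ m → topSum (φ (Function.update P i Q)) Q.1 k
      = topSum (φ (Function.update P i Q')) Q.1 k := by
    intro k hk hkm
    obtain ⟨d, rfl⟩ := Nat.exists_eq_add_of_le' hk
    have s1 := hsp i (Function.update P i Q) Q' (d + 2) hkm
    have s2 := hsp i (Function.update P i Q') Q (d + 2) hkm
    simp only [Function.update_idem, Function.update_self] at s1 s2
    rw [← topSum_swap hm _ Q.1 Q'.1 h0 h1 h d hkm,
      ← topSum_swap hm _ Q.1 Q'.1 h0 h1 h d hkm] at s2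
    exact le_antisymm s2 s1
  obtain ⟨t, rfl⟩ := Q.1.surjective a
  have ht : 2 ≤ (t : ℕ) := by
    by_contra hc
    have : (t : ℕ) = 0 ∨ (t : ℕ) = 1 := by omega
    rcases this with e | e
    · exact ha0 (congrArg _ (Fin.ext (by simpa using e)))
    · exact ha1 (congrArg _ (Fin.ext (by rw [e, hv1])))
  have k1 := key t ht t.2.le
  have k2 := key (t + 1) (by omega) t.2
  rw [topSum_succ, topSum_succ] at k2
  linarith

lemma unc_aux {m n : ℕ} [NeZero m] (hm : 3 ≤ m) {D : Set (Pref m)}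
    (φ : Profile D n → Lottery m) (hto : TopsOnly φ) (hsp : StrategyProof φ)
    (i : Fin n) (P : Profile D n) (Pi' : D) (a : Fin m) :
    ∀ (l : List (Fin m)) (Pi : D), List.IsChain (StronglyConnected D) l →
    l.head? = some (topOf Pi) → l.getLast? = some (topOf Pi') → a ∉ l →
        (φ (Function.update P i Pi)).1 a = (φ (Function.update P i Pi')).1 a := by
  have tops : ∀ Q Q' : D, topOf Q = topOf Q' →
      φ (Function.update P i Q) = φ (Function.update P i Q') := by
    intro Q Q' e
    apply hto
    intro j
    by_cases hj : j = i
    · subst hj; simpa using e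
    · simp [hj]
  intro l
  induction l with
  | nil => intro Pi _ h; simp at h
  | cons x l ih =>
    intro Pi hc hh hg ha
    simp only [List.head?_cons, Option.some.injEq] at hh
    cases l with
    | nil =>
      simp only [List.getLast?_singleton, Option.some.injEq] at hg
      rw [tops Pi Pi' (hh.symm.trans hg)]
    | cons y r =>
      rw [List.isChain_cons_cons] at hc
      obtain ⟨⟨_, Q, hQ, Q', hQ', q0, q1, q0', q1', hk⟩, hc2⟩ := hc
      simp only [List.mem_cons, not_or] at ha
      have s := step_sc hm φ hsp i P ⟨Q, hQ⟩ ⟨Q', hQ'⟩ (q0.trans q1'.symm)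
        (q1.trans q0'.symm) hk a (by simpa [q0] using ha.1) (by simpa [q1] using ha.2.1)
      rw [tops Pi ⟨Q, hQ⟩ (hh.symm.trans q0.symm), s]
      exact ih ⟨Q', hQ'⟩ hc2 (by simp [topOf, q0']) (by simpa using hg)
        (by simp [ha.2.1, ha.2.2])

/-- Uncompromising property: a unanimous, tops-only and strategy-proof
RSCF assigns the same probability to every alternative off a vertex-path when one voter
moves her top from one end of the path to the other. -/
theorem uncompromising (m n : ℕ) [NeZero m] (hm : 3 ≤ m) (hn : 2 ≤ n)
    (D : Set (Pref m)) (φ : Profile D n → Lottery m)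
    (hu : Unanimous φ) (hto : TopsOnly φ) (hsp : StrategyProof φ)
    (l : List (Fin m)) (hl : IsVertexPathOn D Set.univ l)
    (i : Fin n) (P : Profile D n) (Pi Pi' : D)
    (hPi : l.head? = some (topOf Pi)) (hPi' : l.getLast? = some (topOf Pi')) :
    (∀ a : Fin m, a ∉ l →
        (φ (Function.update P i Pi)).1 a = (φ (Function.update P i Pi')).1 a) ∧
    (l.map (fun x => (φ (Function.update P i Pi)).1 x)).sum
      = (l.map (fun x => (φ (Function.update P i Pi')).1 x)).sum := by
  have main := fun a ha => unc_aux hm φ hto hsp i P Pi' a l Pi hl.2.2.2 hPi hPi' ha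
  refine ⟨main, ?_⟩
  rw [← List.sum_toFinset _ hl.2.1, ← List.sum_toFinset _ hl.2.1]
  have c1 := Finset.sum_add_sum_compl l.toFinset (φ (Function.update P i Pi)).1
  have c2 := Finset.sum_add_sum_compl l.toFinset (φ (Function.update P i Pi')).1
  rw [(φ (Function.update P i Pi)).2.2] at c1
  rw [(φ (Function.update P i Pi')).2.2] at c2
  have c3 : ∑ a ∈ l.toFinsetᶜ, (φ (Function.update P i Pi)).1 a
      = ∑ a ∈ l.toFinsetᶜ, (φ (Function.update P i Pi')).1 a :=
    Finset.sum_congr rfl fun a ha => main a (by simpa using ha)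
  linarith
end
end

section
/- Let 1 ≤ p < q ≤ m with q − p > 1, let D be a regular domain that is a (p, q)-hybrid* domain, and let D̄ = {P ∈ D : r_1(P) ∈ M}. If φ : D^n → Δ(A) is a unanimous and strategy-proof RSCF, then Σ_{a_k ∈ M} φ_{a_k}(P) = 1 for every profile P ∈ D̄^n. -/
open Finset

noncomputable section

namespace PFBRPaper

variable {m n : ℕ}

lemma adj_pos {P P' : Pref m} (k : ℕ) (hk : k + 1 < m)
    (h1 : P ⟨k, Nat.lt_of_succ_lt hk⟩ = P' ⟨k + 1, hk⟩)
    (h2 : P ⟨k + 1, hk⟩ = P' ⟨k, Nat.lt_of_succ_lt hk⟩)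
    (h3 : ∀ l : Fin m, (l : ℕ) ≠ k → (l : ℕ) ≠ k + 1 → P l = P' l) (a : Fin m) (j : ℕ)
    (hj : j ≠ k + 1) : ((P.symm a : ℕ) < j ↔ (P'.symm a : ℕ) < j) := by
  obtain ⟨t, rfl⟩ := P.surjective a
  rw [Equiv.symm_apply_apply]
  by_cases e1 : (t : ℕ) = k
  · have : t = ⟨k, Nat.lt_of_succ_lt hk⟩ := Fin.ext e1
    rw [this, h1, Equiv.symm_apply_apply]
    simp only
    omega
  · by_cases e2 : (t : ℕ) = k + 1
    · have : t = ⟨k + 1, hk⟩ := Fin.ext e2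
      rw [this, h2, Equiv.symm_apply_apply]
      simp only
      omega
    · rw [h3 t e1 e2, Equiv.symm_apply_apply]

lemma topSum_eq (lam : Lottery m) (P : Pref m) (j : ℕ) :
    topSum lam P j = ∑ a ∈ Finset.univ.filter (fun a : Fin m => (P.symm a : ℕ) < j), lam.1 a := by
  unfold topSum
  apply Finset.sum_equiv P
  · intro i; simp
  · intro i _; rfl

lemma topSum_succ (lam : Lottery m) (P : Pref m) (z : Fin m) :
    topSum lam P ((P.symm z : ℕ) + 1) = topSum lam P (P.symm z : ℕ) + lam.1 z := by
  unfold topSum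
  have : Finset.univ.filter (fun t : Fin m => (t : ℕ) < (P.symm z : ℕ) + 1)
      = insert (P.symm z) (Finset.univ.filter (fun t : Fin m => (t : ℕ) < (P.symm z : ℕ))) := by
    ext t
    simp only [Finset.mem_filter, Finset.mem_univ, true_and, Finset.mem_insert, Fin.ext_iff]
    omega
  rw [this, Finset.sum_insert (by simp), Equiv.apply_symm_apply, add_comm]

lemma adj_eq {D : Set (Pref m)} {φ : Profile D n → Lottery m} (hsp : StrategyProof φ)
    (P : Profile D n) (i : Fin n) (R R' : D) (k : ℕ) (hk : k + 1 < m)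
    (h1 : R.1 ⟨k, Nat.lt_of_succ_lt hk⟩ = R'.1 ⟨k + 1, hk⟩)
    (h2 : R.1 ⟨k + 1, hk⟩ = R'.1 ⟨k, Nat.lt_of_succ_lt hk⟩)
    (h3 : ∀ l : Fin m, (l : ℕ) ≠ k → (l : ℕ) ≠ k + 1 → R.1 l = R'.1 l) (z : Fin m)
    (hz1 : z ≠ R.1 ⟨k, Nat.lt_of_succ_lt hk⟩) (hz2 : z ≠ R.1 ⟨k + 1, hk⟩) :
    (φ (Function.update P i R)).1 z = (φ (Function.update P i R')).1 z := by
  have key : ∀ j, j ≤ m → j ≠ k + 1 →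
      topSum (φ (Function.update P i R)) R.1 j = topSum (φ (Function.update P i R')) R.1 j := by
    intro j hj hjk
    have tr : ∀ lam : Lottery m, topSum lam R.1 j = topSum lam R'.1 j := by
      intro lam
      rw [topSum_eq, topSum_eq]
      congr 1
      ext a
      simp [adj_pos k hk h1 h2 h3 a j hjk]
    have s1 := hsp i (Function.update P i R) R' j hj
    have s2 := hsp i (Function.update P i R') R j hj
    simp only [Function.update_idem, Function.update_self] at s1 s2
    rw [← tr, ← tr] at s2
    exact le_antisymm s2 s1
  have n1 : (R.1.symm z : ℕ) ≠ k := fun h => hz1 (by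
    rw [← Equiv.symm_apply_eq]; exact Fin.ext h)
  have n2 : (R.1.symm z : ℕ) ≠ k + 1 := fun h => hz2 (by
    rw [← Equiv.symm_apply_eq]; exact Fin.ext h)
  have k1 := key (R.1.symm z : ℕ) (R.1.symm z).2.le n2
  have k2 := key ((R.1.symm z : ℕ) + 1) (R.1.symm z).2 (by omega)
  rw [topSum_succ, topSum_succ] at k2
  linarith

/-- `R` and `R'` rank `u` and `v` in the same way. -/
def Keep (u v : Fin m) (R R' : Pref m) : Prop :=
  (Prefers R u v ∧ Prefers R' u v) ∨ (Prefers R v u ∧ Prefers R' v u)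

lemma Keep.total {u v : Fin m} (huv : u ≠ v) (R : Pref m) : Prefers R u v ∨ Prefers R v u := by
  unfold Prefers
  exact lt_or_gt_of_ne (fun h => huv (R.symm.injective h))

lemma path_inv_aux {D : Set (Pref m)} (hD : NoRestorationDomain D) {u v : Fin m}
    (g : D → ℝ)
    (hg : ∀ R R' : D, Adjacent R.1 R'.1 → Prefers R.1 u v → Prefers R'.1 u v → g R = g R')
    (R R' : D) (hR : Prefers R.1 u v) (hR' : Prefers R'.1 u v) : g R = g R' := by
  by_cases hne : R.1 = R'.1
  · rw [Subtype.ext hne]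
  obtain ⟨π, w, ⟨hw, hmem, -, h0, h1, hadj⟩, hno⟩ := hD R.1 R.2 R'.1 R'.2 hne u v
  have huv : u ≠ v := by
    rintro rfl; exact lt_irrefl _ hR
  have hall : ∀ j, j < w → Prefers (π j) u v := by
    intro j hj
    rcases Keep.total huv (π j) with h | h
    · exact h
    exfalso
    have p0 : Prefers (π 0) u v := h0 ▸ hR
    have p1 : Prefers (π (w - 1)) u v := h1 ▸ hR'
    by_cases e0 : j = 0
    · subst e0; exact lt_asymm p0 h
    by_cases e1 : j = w - 1
    · rw [← e1] at p1; exact lt_asymm p1 h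
    exact (hno 0 j (w - 1) (by omega) (by omega) (by omega)).1 ⟨p0, h, p1⟩
  have hstep : ∀ j (hj : j < w), g R = g ⟨π j, hmem j hj⟩ := by
    intro j
    induction j with
    | zero => intro hj; congr 1; exact Subtype.ext h0.symm
    | succ j ih =>
      intro hj
      rw [ih (by omega)]
      exact hg _ _ (hadj j hj) (hall j (by omega)) (hall (j + 1) hj)
  rw [hstep (w - 1) (by omega)]
  congr 1
  exact Subtype.ext h1

lemma path_inv {D : Set (Pref m)} (hD : NoRestorationDomain D) {u v : Fin m}
    (g : D → ℝ)
    (hg : ∀ R R' : D, Adjacent R.1 R'.1 → Keep u v R.1 R'.1 → g R = g R')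
    (R R' : D) (hR : Keep u v R.1 R'.1) : g R = g R' := by
  rcases hR with ⟨h, h'⟩ | ⟨h, h'⟩
  · exact path_inv_aux hD g (fun R R' ha k1 k2 => hg R R' ha (Or.inl ⟨k1, k2⟩)) R R' h h'
  · exact path_inv_aux hD g (fun R R' ha k1 k2 => hg R R' ha (Or.inr ⟨k1, k2⟩)) R R' h h'

lemma prof_step {D : Set (Pref m)} (G : Profile D n → ℝ) (P P' : Profile D n)
    (h : ∀ (T : Profile D n) (j : Fin n),
      G (Function.update T j (P j)) = G (Function.update T j (P' j))) : G P = G P' := by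
  have main : ∀ s : Finset (Fin n), G P = G (fun j => if j ∈ s then P' j else P j) := by
    intro s
    induction s using Finset.induction_on with
    | empty => simp
    | insert a s ha ih =>
      rw [ih]
      have e := h (fun j => if j ∈ s then P' j else P j) a
      convert e using 2
      · funext j
        by_cases hj : j = a
        · subst hj; simp [ha]
        · simp [hj]
      · funext j
        by_cases hj : j = a
        · subst hj; simp
        · simp [hj]
  simpa using main Finset.univ

lemma prof_inv {D : Set (Pref m)} (hD : NoRestorationDomain D) {u v : Fin m}
    (G : Profile D n → ℝ)
    (hG : ∀ (P : Profile D n) (j : Fin n) (R R' : D), Adjacent R.1 R'.1 → Keep u v R.1 R'.1 →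
      G (Function.update P j R) = G (Function.update P j R'))
    (P P' : Profile D n) (hP : ∀ j, Keep u v (P j).1 (P' j).1) : G P = G P' :=
  prof_step G P P' fun T j =>
    path_inv hD (fun R => G (Function.update T j R)) (fun R R' h1 h2 => hG T j R R' h1 h2)
      (P j) (P' j) (hP j)

lemma same_top {D : Set (Pref m)} [NeZero m] (hD : NoRestorationDomain D)
    {φ : Profile D n → Lottery m} (hu : Unanimous φ) (hsp : StrategyProof φ)
    (P : Profile D n) (i : Fin n) (Q Q' : D) (hadj : Adjacent Q.1 Q'.1)
    (htop : Q.1 0 = Q'.1 0) (z : Fin m) :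
    (φ (Function.update P i Q)).1 z = (φ (Function.update P i Q')).1 z := by
  obtain ⟨-, k, hk, h1, h2, h3⟩ := hadj
  set a := Q.1 ⟨k, Nat.lt_of_succ_lt hk⟩ with ha
  set b := Q.1 ⟨k + 1, hk⟩ with hb
  have hab : a ≠ b := by
    intro h
    have := Q.1.injective h
    simp [Fin.ext_iff] at this
  let δ : Profile D n → Fin m → ℝ := fun P z =>
    (φ (Function.update P i Q)).1 z - (φ (Function.update P i Q')).1 z
  have δ0 : ∀ P z, z ≠ a → z ≠ b → δ P z = 0 := fun P z hz1 hz2 =>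
    sub_eq_zero.2 (adj_eq hsp P i Q Q' k hk h1 h2 h3 z hz1 hz2)
  have δs : ∀ P, δ P a + δ P b = 0 := by
    intro P
    have e : ∑ z, δ P z = 0 := by
      simp only [δ, Finset.sum_sub_distrib]
      rw [(φ _).2.2, (φ _).2.2, sub_self]
    rw [← e, ← Finset.sum_pair hab]
    apply Finset.sum_subset (Finset.subset_univ _)
    intro x _ hx
    simp only [Finset.mem_insert, Finset.mem_singleton, not_or] at hx
    exact δ0 P x hx.1 hx.2
  have Qab : Prefers Q.1 a b := by
    unfold Prefers; rw [ha, hb, Equiv.symm_apply_apply, Equiv.symm_apply_apply]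
    simp [Fin.lt_def]
  have Qba : Prefers Q'.1 b a := by
    unfold Prefers; rw [h1, h2, Equiv.symm_apply_apply, Equiv.symm_apply_apply]
    simp [Fin.lt_def]
  have hG : ∀ (P : Profile D n) (j : Fin n) (R R' : D), Adjacent R.1 R'.1 →
      Keep a b R.1 R'.1 → δ (Function.update P j R) a = δ (Function.update P j R') a := by
    intro P j R R' hA hK
    by_cases hij : j = i
    · subst hij; simp [δ]
    obtain ⟨-, l, hl, g1, g2, g3⟩ := hA
    have inv : ∀ z, z ≠ R.1 ⟨l, Nat.lt_of_succ_lt hl⟩ → z ≠ R.1 ⟨l + 1, hl⟩ →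
        δ (Function.update P j R) z = δ (Function.update P j R') z := by
      intro z hz1 hz2
      simp only [δ]
      rw [Function.update_comm hij, Function.update_comm hij, Function.update_comm hij,
        Function.update_comm hij,
        adj_eq hsp _ j R R' l hl g1 g2 g3 z hz1 hz2, adj_eq hsp _ j R R' l hl g1 g2 g3 z hz1 hz2]
    by_cases ca : a ≠ R.1 ⟨l, Nat.lt_of_succ_lt hl⟩ ∧ a ≠ R.1 ⟨l + 1, hl⟩
    · exact inv a ca.1 ca.2
    by_cases cb : b ≠ R.1 ⟨l, Nat.lt_of_succ_lt hl⟩ ∧ b ≠ R.1 ⟨l + 1, hl⟩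
    · have := inv b cb.1 cb.2
      have s1 := δs (Function.update P j R)
      have s2 := δs (Function.update P j R')
      linarith
    exfalso
    have ca' : a = R.1 ⟨l, Nat.lt_of_succ_lt hl⟩ ∨ a = R.1 ⟨l + 1, hl⟩ := by tauto
    have cb' : b = R.1 ⟨l, Nat.lt_of_succ_lt hl⟩ ∨ b = R.1 ⟨l + 1, hl⟩ := by tauto
    have r1 : R.1.symm (R.1 ⟨l, Nat.lt_of_succ_lt hl⟩) = ⟨l, Nat.lt_of_succ_lt hl⟩ := by simp
    have r2 : R.1.symm (R.1 ⟨l + 1, hl⟩) = ⟨l + 1, hl⟩ := by simp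
    have r3 : R'.1.symm (R.1 ⟨l, Nat.lt_of_succ_lt hl⟩) = ⟨l + 1, hl⟩ := by rw [g1]; simp
    have r4 : R'.1.symm (R.1 ⟨l + 1, hl⟩) = ⟨l, Nat.lt_of_succ_lt hl⟩ := by rw [g2]; simp
    unfold Keep Prefers at hK
    rcases ca' with ca' | ca' <;> rcases cb' with cb' | cb'
    · exact hab (ca'.trans cb'.symm)
    · rw [ca', cb', r1, r2, r3, r4] at hK
      simp [Fin.lt_def] at hK
    · rw [ca', cb', r1, r2, r3, r4] at hK
      simp [Fin.lt_def] at hK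
    · exact hab (ca'.trans cb'.symm)
  classical
  let P' : Profile D n := fun j => if Prefers (P j).1 a b then Q else Q'
  have hfin : δ P a = δ P' a := by
    apply prof_inv hD (u := a) (v := b) (fun P => δ P a) hG
    intro j
    by_cases h : Prefers (P j).1 a b
    · left; simp only [P', if_pos h]; exact ⟨h, Qab⟩
    · right; simp only [P', if_neg h]
      exact ⟨(Keep.total hab _).resolve_left h, Qba⟩
  have hP' : ∀ j, topOf (P' j) = Q.1 0 := by
    intro j
    by_cases h : Prefers (P j).1 a b
    · simp only [P', if_pos h]; rfl
    · simp only [P', if_neg h]; exact htop.symm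
  have un : ∀ S : D, S.1 0 = Q.1 0 → φ (Function.update P' i S) = degLottery (Q.1 0) := by
    intro S hS
    apply hu
    intro j
    by_cases h : j = i
    · subst h; rw [Function.update_self]; exact hS
    · simpa [h] using hP' j
  have z0 : δ P a = 0 := by
    rw [hfin]; simp only [δ]; rw [un Q rfl, un Q' htop.symm, sub_self]
  have zb : δ P b = 0 := by have := δs P; linarith
  have : δ P z = 0 := by
    by_cases za : z = a
    · rw [za]; exact z0
    by_cases zb' : z = b
    · rw [zb']; exact zb
    exact δ0 P z za zb'
  exact sub_eq_zero.1 this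

lemma outside_zero {D : Set (Pref m)} [NeZero m] (hD : NoRestorationDomain D)
    {φ : Profile D n → Lottery m} (hu : Unanimous φ) (hsp : StrategyProof φ)
    (u v : Fin m) (S : Set (Fin m)) (hn : 0 < n)
    (hS : ∀ R ∈ D, (R 0 ∈ S → Prefers R u v) ∧ (R 0 ∉ S → Prefers R v u))
    (P : Profile D n) (hP : ∀ i, topOf (P i) ∈ S) (c : Fin m) (hc : c ∉ S) :
    (φ P).1 c = 0 := by
  let Ps : Profile D n := fun _ => P ⟨0, hn⟩
  have inSS : ∀ R ∈ D, Prefers R u v → R 0 ∈ S := by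
    intro R hR h
    by_contra h'
    exact lt_asymm h ((hS R hR).2 h')
  have key : ∀ (P : Profile D n) (j : Fin n) (R R' : D), Adjacent R.1 R'.1 →
      Prefers R.1 u v → Prefers R'.1 u v →
      (φ (Function.update P j R)).1 c = (φ (Function.update P j R')).1 c := by
    intro P j R R' hA h h'
    by_cases ht : R.1 0 = R'.1 0
    · exact same_top hD hu hsp P j R R' hA ht c
    have t1 := inSS _ R.2 h
    have t2 := inSS _ R'.2 h'
    obtain ⟨-, k, hk, h1, h2, h3⟩ := hA
    have hk0 : k = 0 := by
      by_contra hk0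
      exact ht (h3 0 (by simp; omega) (by simp))
    subst hk0
    have z0 : (⟨0, Nat.lt_of_succ_lt hk⟩ : Fin m) = 0 := by ext; simp
    refine adj_eq hsp P j R R' 0 hk h1 h2 h3 c ?_ ?_
    · rw [z0]; rintro rfl; exact hc t1
    · rw [h2, z0]; rintro rfl; exact hc t2
  have e : (φ P).1 c = (φ Ps).1 c := by
    exact prof_step (fun T => (φ T).1 c) P Ps fun T j =>
      path_inv_aux hD (u := u) (v := v) (fun R => (φ (Function.update T j R)).1 c)
        (fun R R' h1 h2 h3 => key T j R R' h1 h2 h3) (P j) (Ps j)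
        ((hS _ (P j).2).1 (hP j)) ((hS _ (Ps j).2).1 (hP _))
  rw [e, hu Ps (topOf (P ⟨0, hn⟩)) (fun _ => rfl)]
  simp only [degLottery]
  rw [if_neg]
  rintro rfl
  exact hc (hP _)

end PFBRPaper

open PFBRPaper

/-- On a regular `(p,q)`-hybrid* domain with `q - p > 1`, a unanimous and
strategy-proof RSCF puts probability one on `M` whenever all voters' tops lie in `M`. -/
theorem middle_probability_one (m n : ℕ) [NeZero m] (hm : 3 ≤ m) (hn : 2 ≤ n)
    (D : Set (Pref m)) (p q : Fin m) (hgap : (p : ℕ) + 1 < (q : ℕ))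
    (hreg : RegularDomain D) (hstar : IsHybridStar D p q)
    (φ : Profile D n → Lottery m) (hu : Unanimous φ) (hsp : StrategyProof φ) :
    ∀ P : Profile D n, (∀ i, p ≤ topOf (P i) ∧ topOf (P i) ≤ q) →
      (φ P).prob (midSet p q) = 1 := by
  intro P hP
  obtain ⟨-, -, hD⟩ := hreg
  have hhyb := hstar.1
  have top_pref : ∀ (R : Pref m) (w : Fin m), w ≠ R 0 → Prefers R (R 0) w := by
    intro R w hw
    unfold Prefers
    rw [Equiv.symm_apply_apply]
    refine lt_of_le_of_ne (Fin.zero_le _) ?_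
    intro h
    exact hw (by rw [h, Equiv.apply_symm_apply])
  have low : ∀ c : Fin m, c < p → (φ P).1 c = 0 := by
    intro c hc
    have hcp : (c : ℕ) < p := hc
    let w : Fin m := ⟨(p : ℕ) - 1, by have := p.2; omega⟩
    have hw : (w : ℕ) = p - 1 := rfl
    refine outside_zero hD hu hsp p w (Set.Ici p) (by omega) ?_ P (fun i => (hP i).1) c
      (by simpa using hc)
    intro R hR
    have hR1 := (hhyb hR).1
    constructor
    · intro h
      rcases eq_or_lt_of_le (show p ≤ R 0 from h) with h | h
      · have := top_pref R w (by rw [← h]; intro h; rw [h] at hw; omega)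
        rwa [← h] at this
      · exact hR1 w p (Or.inl ⟨by rw [Fin.le_def]; omega, le_rfl⟩)
          (Or.inl ⟨by rw [Fin.lt_def]; omega, h⟩)
    · intro h
      have h : R 0 < p := by simpa using h
      by_cases h' : R 0 = w
      · have := top_pref R p (ne_of_gt h)
        rwa [h'] at this
      · have h2 : (R 0 : ℕ) ≠ w := fun e => h' (Fin.ext e)
        rw [Fin.lt_def] at h
        exact hR1 p w (Or.inl ⟨le_rfl, by rw [Fin.le_def]; omega⟩)
          (Or.inr ⟨by rw [Fin.lt_def]; omega, by rw [Fin.lt_def]; omega⟩)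
  have high : ∀ c : Fin m, q < c → (φ P).1 c = 0 := by
    intro c hc
    have hcp : (q : ℕ) < c := hc
    let w : Fin m := ⟨(q : ℕ) + 1, by have := c.2; omega⟩
    have hw : (w : ℕ) = q + 1 := rfl
    refine outside_zero hD hu hsp q w (Set.Iic q) (by omega) ?_ P (fun i => (hP i).2) c
      (by simpa using hc)
    intro R hR
    have hR1 := (hhyb hR).1
    constructor
    · intro h
      rcases eq_or_lt_of_le (show R 0 ≤ q from h) with h | h
      · have := top_pref R w (by rw [h]; intro h; rw [h] at hw; omega)
        rwa [h] at this
      · exact hR1 w q (Or.inr ⟨by rw [Fin.le_def]; omega, le_rfl⟩)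
          (Or.inr ⟨h, by rw [Fin.lt_def]; omega⟩)
    · intro h
      have h : q < R 0 := by simpa using h
      by_cases h' : R 0 = w
      · have := top_pref R q (ne_of_lt h)
        rwa [h'] at this
      · have h2 : (R 0 : ℕ) ≠ w := fun e => h' (Fin.ext e)
        rw [Fin.lt_def] at h
        exact hR1 q w (Or.inr ⟨le_rfl, by rw [Fin.le_def]; omega⟩)
          (Or.inl ⟨by rw [Fin.lt_def]; omega, by rw [Fin.lt_def]; omega⟩)
  unfold Lottery.prob
  refine Eq.trans ?_ (φ P).2.2
  apply Finset.sum_subset (Finset.subset_univ _)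
  intro x _ hx
  simp only [midSet, Finset.mem_filter, Finset.mem_univ, true_and, not_and_or, not_le] at hx
  rcases hx with hx | hx
  · exact low x hx
  · exact high x hx
end
end

section
/- Let 1 ≤ p < q ≤ m with q − p > 1, let D be a regular domain that is a (p, q)-hybrid* domain, and let D̄ = {P ∈ D : r_1(P) ∈ M}. Every unanimous and strategy-proof RSCF φ : D^n → Δ(A) behaves like a random dictatorship on D̄: there exist conditional dictatorial coefficients ε_i ≥ 0 for i ∈ N with Σ_{i∈N} ε_i = 1 such that φ(P) = Σ_{i∈N} ε_i e_{r_1(P_i)} for all P ∈ D̄^n. -/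
open Finset

noncomputable section

open PFBRPaper


namespace RDProof

/-- connected in the graph `E` avoiding `x`. -/
def Conn {V : Type*} (E : V → V → Prop) (x : V) : V → V → Prop :=
  Relation.ReflTransGen (fun a b => E a b ∧ a ≠ x ∧ b ≠ x)

section graph
variable {V : Type*} {E : V → V → Prop}

lemma Conn.symm (hE : ∀ a b, E a b → E b a) {x y z : V} (h : Conn E x y z) : Conn E x z y := by
  unfold Conn at *
  induction h with
  | refl => exact Relation.ReflTransGen.refl
  | tail _ h ih => exact Relation.ReflTransGen.head ⟨hE _ _ h.1, h.2.2, h.2.1⟩ ih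

lemma Conn.trans {x y z w : V} (h : Conn E x y z) (h' : Conn E x z w) : Conn E x y w :=
  Relation.ReflTransGen.trans h h'

lemma Conn.edge {x y z : V} (h : E y z) (h1 : y ≠ x) (h2 : z ≠ x) : Conn E x y z :=
  Relation.ReflTransGen.single ⟨h, h1, h2⟩

lemma Conn.eq_of {x y : V} (h : Conn E x y x) : y = x := by
  rcases Relation.ReflTransGen.cases_tail h with h | ⟨c, _, h⟩
  · exact h.symm
  · exact absurd rfl h.2.2

lemma suffix_conn (l : List V) (e : V) : ∀ k : V, (k :: l).IsChain E →
    (k :: l).getLast? = some e → ∀ x, x ∉ k :: l → Conn E x k e := by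
  induction l with
  | nil => 
    intro k _ h x _
    simp at h
    subst h
    exact Relation.ReflTransGen.refl
  | cons a l ih =>
    intro k hc h x hx
    rw [List.isChain_cons_cons] at hc
    rw [List.getLast?_cons_cons] at h
    simp only [List.mem_cons, not_or] at hx
    refine Conn.trans (Conn.edge hc.1 (Ne.symm hx.1) (Ne.symm hx.2.1)) (ih a hc.2 h x ?_)
    simp [hx.2]

lemma split_path (hE : ∀ a b, E a b → E b a) {l : List V} {s e k : V} (hn : l.Nodup)
    (hc : l.IsChain E) (hs : l.head? = some s) (he : l.getLast? = some e) (hk : k ∈ l) :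
    ∃ l1 l2 : List V, (∀ x, x ∉ l1 → x ≠ k → Conn E x k s) ∧
      (∀ x, x ∉ l2 → x ≠ k → Conn E x k e) ∧ (∀ x, x ∈ l1 → x ∈ l2 → False) ∧
      (∀ z ∈ l2, Conn E k z e) := by
  obtain ⟨l1, l2, rfl⟩ := List.append_of_mem hk
  refine ⟨l1, l2, ?_, ?_, ?_, ?_⟩
  · intro x hx hxk
    have hc' : (k :: l1.reverse).IsChain E := by
      have h1 : (l1 ++ [k]).IsChain E := by
        have : (l1 ++ k :: l2) = (l1 ++ [k]) ++ l2 := by simp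
        rw [this] at hc
        exact hc.left_of_append
      have h2 := List.isChain_reverse.mpr (h1.imp (fun a b h => hE a b h))
      simpa using h2
    refine suffix_conn l1.reverse s k hc' ?_ x (by simp [hx, hxk])
    cases l1 with
    | nil => simpa using hs
    | cons a l1 => 
      simp at hs
      subst hs
      simp [List.getLast?_cons]
  · intro x hx hxk
    refine suffix_conn l2 e k hc.right_of_append ?_ x (by simp [hx, hxk])
    rw [List.getLast?_append] at he
    simpa [List.getLast?_cons] using he
  · intro x h1 h2
    have := (List.nodup_append.mp hn).2.2 x h1 x (by simp [h2])
    exact this rfl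
  · intro z hz
    obtain ⟨a, b, rfl⟩ := List.append_of_mem hz
    refine suffix_conn b e z ?_ ?_ k ?_
    · have := hc.right_of_append
      rw [← List.cons_append] at this
      exact this.right_of_append
    · simp [List.getLast?_append, List.getLast?_cons] at he ⊢
      exact he
    · have := (List.nodup_append.mp hn).2.1
      rw [List.nodup_cons] at this
      intro h
      exact this.1 (by simp at h ⊢; tauto)

lemma hit_p (hE : ∀ a b, E a b → E b a) {Lo : V → Prop} {p : V}
    (h1 : ∀ a b, E a b → Lo a → Lo b ∨ b = p) {x y z : V} (h : Conn E x y z) (hy : ¬ Lo y)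
    (hz : Lo z ∨ z = p) : Conn E x y p := by
  have key : Conn E x y p ∨ ¬ Lo z := by
    clear hz
    unfold Conn at *
    induction h with
    | refl => exact Or.inr hy
    | @tail b c hb h ih =>
      rcases ih with ih | ih
      · exact Or.inl ih
      · by_cases hc : Lo c
        · rcases h1 c b (hE _ _ h.1) hc with h' | h'
          · exact absurd h' ih
          · subst h'; exact Or.inl hb
        · exact Or.inr hc
  rcases hz with hz | hz
  · exact key.resolve_right (fun h => h hz)
  · subst hz; exact h

/-- The half of the graph data used. -/
structure GData (E : V → V → Prop) (Lo Hi : V → Prop) (p q s e : V) : Prop where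
  sym : ∀ a b, E a b → E b a
  irr : ∀ a b, E a b → a ≠ b
  lo : ∀ a b, E a b → Lo a → Lo b ∨ b = p
  hi : ∀ a b, E a b → Hi a → Hi b ∨ b = q
  pl : ¬ Lo p
  ph : ¬ Hi p
  ql : ¬ Lo q
  qh : ¬ Hi q
  hs : Lo s ∨ s = p
  he : Hi e ∨ e = q
  pq : p ≠ q
  path : ∀ k, ¬ Lo k → ¬ Hi k → ∃ l : List V, l.Nodup ∧ l.IsChain E ∧ l.head? = some s ∧
    l.getLast? = some e ∧ k ∈ l
  third : ∃ r, ¬ Lo r ∧ ¬ Hi r ∧ r ≠ p ∧ r ≠ q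
  leafp : ¬ ∃! b, (¬ Lo b ∧ ¬ Hi b) ∧ E p b
  leafq : ¬ ∃! b, (¬ Lo b ∧ ¬ Hi b) ∧ E q b

variable {Lo Hi : V → Prop} {p q s e : V}

lemma GData.mirror (G : GData E Lo Hi p q s e) : GData E Hi Lo q p e s where
  sym := G.sym
  irr := G.irr
  lo := G.hi
  hi := G.lo
  pl := G.qh
  ph := G.ql
  ql := G.ph
  qh := G.pl
  hs := G.he
  he := G.hs
  pq := G.pq.symm
  path := by
    intro k h1 h2
    obtain ⟨l, a, b, c, d, f⟩ := G.path k h2 h1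
    refine ⟨l.reverse, by simpa using a, List.isChain_reverse.mpr (b.imp (fun a b h => G.sym a b h)),
      by simpa using d, by simpa using c, by simpa using f⟩
  third := by
    obtain ⟨r, a, b, c, d⟩ := G.third
    exact ⟨r, b, a, d, c⟩
  leafp := by
    have := G.leafq
    simpa only [and_comm (a := ¬ Hi _)] using this
  leafq := by
    have := G.leafp
    simpa only [and_comm (a := ¬ Hi _)] using this

lemma GData.r1 (G : GData E Lo Hi p q s e) {x y : V} (hl : ¬ Lo y) (hh : ¬ Hi y) (hxy : y ≠ x) :
    Conn E x y p ∨ Conn E x y q := by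
  obtain ⟨l, a, b, c, d, f⟩ := G.path y hl hh
  obtain ⟨l1, l2, h1, h2, h3, -⟩ := split_path G.sym a b c d f
  by_cases hx : x ∈ l1
  · right
    exact hit_p G.sym G.hi (h2 x (fun h => h3 x hx h) hxy.symm) hh G.he
  · left
    exact hit_p G.sym G.lo (h1 x hx hxy.symm) hl G.hs

lemma GData.r2 (G : GData E Lo Hi p q s e) {y : V} (hl : ¬ Lo y) (hh : ¬ Hi y) (hxy : y ≠ p) :
    Conn E p y q := by
  rcases G.r1 hl hh hxy with h | h
  · exact absurd h.eq_of hxy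
  · exact h

lemma GData.r3 (G : GData E Lo Hi p q s e) : ∃ w, (¬ Lo w ∧ ¬ Hi w) ∧ E p w := by
  obtain ⟨r, hl, hh, hp, hq⟩ := G.third
  have h : Conn E q r p := G.mirror.r2 hh hl hq
  have key : ∀ z, Conn E q r z → (¬ Lo z ∧ z ≠ p) ∨ ∃ w, (¬ Lo w ∧ ¬ Hi w) ∧ E p w := by
    intro z hz
    unfold Conn at hz
    induction hz with
    | refl => exact Or.inl ⟨hl, hp⟩
    | @tail b c _ h ih =>
      rcases ih with ih | ih
      · by_cases hc : Lo c
        · rcases G.lo c b (G.sym _ _ h.1) hc with h' | h'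
          · exact absurd h' ih.1
          · exact absurd h' ih.2
        · by_cases hcp : c = p
          · rw [hcp] at h
            refine Or.inr ⟨b, ⟨ih.1, fun hb => ?_⟩, G.sym _ _ h.1⟩
            rcases G.hi _ _ h.1 hb with h' | h'
            · exact G.ph h'
            · exact G.pq h'
          · exact Or.inl ⟨hc, hcp⟩
      · exact Or.inr ih
  rcases key p h with h | h
  · exact absurd rfl h.2
  · exact h

lemma GData.r4 (G : GData E Lo Hi p q s e) : ∃ w r, (¬ Lo w ∧ ¬ Hi w) ∧ (¬ Lo r ∧ ¬ Hi r) ∧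
    w ≠ p ∧ r ≠ p ∧ r ≠ w ∧ E p w ∧ ∀ y, ¬ Lo y → ¬ Hi y → y ≠ w → Conn E w y p := by
  obtain ⟨w1, hw1, hE1⟩ := G.r3
  have h2 : ∃ w2, ((¬ Lo w2 ∧ ¬ Hi w2) ∧ E p w2) ∧ w2 ≠ w1 := by
    by_contra hcon
    push Not at hcon
    exact G.leafp ⟨w1, ⟨hw1, hE1⟩, hcon⟩
  obtain ⟨w2, ⟨hw2, hE2⟩, hne⟩ := h2
  have n1 := (G.irr _ _ hE1).symm
  have n2 := (G.irr _ _ hE2).symm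
  have fin : ∀ w, Conn E w p q → ∀ y, ¬ Lo y → ¬ Hi y → y ≠ w → Conn E w y p := by
    intro w h y a b c
    rcases G.r1 a b c with h' | h'
    · exact h'
    · exact h'.trans (h.symm G.sym)
  obtain ⟨l, a, b, c, d, f⟩ := G.path w1 hw1.1 hw1.2
  obtain ⟨l1, l2, -, h2, -, h4⟩ := split_path G.sym a b c d f
  by_cases hw : w2 ∈ l2
  · refine ⟨w1, w2, hw1, hw2, n1, n2, hne, hE1, fin w1 ?_⟩
    exact (Conn.edge hE2 n1.symm hne).trans (hit_p G.sym G.hi (h4 w2 hw) hw2.2 G.he)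
  · refine ⟨w2, w1, hw2, hw1, n2, n1, hne.symm, hE2, fin w2 ?_⟩
    exact (Conn.edge hE1 n2.symm hne.symm).trans (hit_p G.sym G.hi (h2 w2 hw hne) hw1.2 G.he)

end graph

/-- change coordinates one at a time -/
lemma transport {n : ℕ} {α : Type*} (r : α → α → Prop) (I : (Fin n → α) → Prop)
    (h : ∀ R i b, r (R i) b → I R → I (Function.update R i b)) (R R' : Fin n → α)
    (hr : ∀ i, r (R i) (R' i)) (hI : I R) : I R' := by
  classical
  have key : ∀ s : Finset (Fin n), I (fun i => if i ∈ s then R' i else R i) := by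
    intro s
    induction s using Finset.induction_on with
    | empty => simpa using hI
    | insert a s ha ih =>
      have := h _ a (R' a) (by simpa [ha] using hr a) ih
      convert this using 1
      funext i
      by_cases hi : i = a
      · subst hi; simp
      · simp [hi]
  simpa using key Finset.univ

/-- abstract rule on tops -/
structure Rule {V : Type*} [Fintype V] (n : ℕ) (E : V → V → Prop) (f : (Fin n → V) → V → ℝ) : Prop where
  nonneg : ∀ t x, 0 ≤ f t x
  sum : ∀ t, ∑ x, f t x = 1
  unan1 : ∀ a, f (fun _ => a) a = 1
  unan0 : ∀ a x, x ≠ a → f (fun _ => a) x = 0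
  edge : ∀ t i b z, E (t i) b → z ≠ t i → z ≠ b → f (Function.update t i b) z = f t z

section rule
variable {V : Type*} [Fintype V] {n : ℕ} {E : V → V → Prop} {f : (Fin n → V) → V → ℝ}

lemma Rule.conn (F : Rule n E f) {x : V} {t t' : Fin n → V} (h : ∀ i, Conn E x (t i) (t' i)) :
    f t' x = f t x := by
  refine transport (Conn E x) (fun R => f R x = f t x) ?_ t t' h rfl
  intro R i b hb hI
  rw [← hI]
  have key : ∀ b, Conn E x (R i) b → f (Function.update R i b) x = f R x := by
    intro b hb
    unfold Conn at hb
    induction hb with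
    | refl => simp
    | @tail c d _ h ih =>
      rw [← ih]
      have := F.edge (Function.update R i c) i d x (by simpa using h.1) (by simpa using h.2.1.symm) h.2.2.symm
      simpa using this
  exact key b hb

variable {Lo Hi : V → Prop} {p q s e : V}

lemma Rule.additive (F : Rule n E f) (G : GData E Lo Hi p q s e) :
    ∃ ε : Fin n → ℝ, (∀ i, 0 ≤ ε i) ∧ ∑ i, ε i = 1 ∧
      ∀ (t : Fin n → V), (∀ i, ¬ Lo (t i) ∧ ¬ Hi (t i)) → ∀ S : Finset (Fin n),
        (∀ i, i ∈ S ↔ t i = p) → f t p = ∑ i ∈ S, ε i := by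
  classical
  obtain ⟨w, r, hw, hr, hwp, hrp, hrw, hE, hcw⟩ := G.r4
  let T : Finset (Fin n) → Finset (Fin n) → Fin n → V := fun S T i =>
    if i ∈ S then p else if i ∈ T then w else r
  let g : Finset (Fin n) → ℝ := fun S => f (T S ∅) p
  have hpp : ∀ y y', (¬ Lo y ∧ ¬ Hi y) → (¬ Lo y' ∧ ¬ Hi y') → y ≠ p → y' ≠ p → Conn E p y y' := by
    intro y y' a b c d
    exact (G.r2 a.1 a.2 c).trans ((G.r2 b.1 b.2 d).symm G.sym)
  have hg : ∀ (t : Fin n → V), (∀ i, ¬ Lo (t i) ∧ ¬ Hi (t i)) → ∀ S : Finset (Fin n),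
        (∀ i, i ∈ S ↔ t i = p) → f t p = g S := by
    intro t ht S hS
    refine F.conn (fun i => ?_)
    by_cases hi : i ∈ S
    · have := (hS i).1 hi
      simp only [T, hi, if_true, this]
      exact Relation.ReflTransGen.refl
    · have h' : t i ≠ p := fun h => hi ((hS i).2 h)
      simp only [T, hi, if_false, Finset.notMem_empty]
      exact hpp _ _ hr (ht i) hrp h'
  have hTM : ∀ A B i, ¬ Lo (T A B i) ∧ ¬ Hi (T A B i) := by
    intro A B i
    simp only [T]
    split_ifs
    · exact ⟨G.pl, G.ph⟩
    · exact hw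
    · exact hr
  have hg0 : g ∅ = 0 := by
    have : T ∅ ∅ = fun _ => r := by funext i; simp [T]
    simp only [g, this]
    exact F.unan0 r p hrp.symm
  have hgu : g Finset.univ = 1 := by
    have : T Finset.univ ∅ = fun _ => p := by funext i; simp [T]
    simp only [g, this]
    exact F.unan1 p
  -- moving from w to p
  have hmove : ∀ A B, Disjoint A B → f (T A B) p + f (T A B) w = g (A ∪ B) := by
    intro A B hAB
    have h1 : ∀ z, z ≠ p → z ≠ w → f (T (A ∪ B) ∅) z = f (T A B) z := by
      intro z hzp hzw
      refine F.conn (fun i => ?_)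
      simp only [T, Finset.mem_union, Finset.notMem_empty, if_false]
      by_cases hA : i ∈ A
      · simp only [hA, true_or, if_true]; exact Relation.ReflTransGen.refl
      · by_cases hB : i ∈ B
        · simp only [hA, hB, or_true, if_true, if_false]
          exact Conn.edge (G.sym _ _ hE) hzw.symm hzp.symm
        · simp only [hA, hB, or_false, if_false]; exact Relation.ReflTransGen.refl
    have h2 : f (T (A ∪ B) ∅) w = 0 := by
      rw [← F.unan0 p w hwp]
      refine F.conn (fun i => ?_)
      refine (hcw _ (hTM _ _ _).1 (hTM _ _ _).2 ?_).symm G.sym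
      simp only [T, Finset.notMem_empty, if_false]
      split_ifs
      · exact hwp.symm
      · exact hrw
    have e1 := F.sum (T A B)
    have e2 := F.sum (T (A ∪ B) ∅)
    have hsplit : ∀ t, ∑ x, f t x = f t p + (f t w + ∑ x ∈ (Finset.univ.erase p).erase w, f t x) := by
      intro t
      rw [Finset.add_sum_erase _ _ (by simp [hwp]), Finset.add_sum_erase _ _ (by simp)]
    rw [hsplit] at e1 e2
    have h3 : ∑ x ∈ (Finset.univ.erase p).erase w, f (T (A ∪ B) ∅) x
        = ∑ x ∈ (Finset.univ.erase p).erase w, f (T A B) x := by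
      refine Finset.sum_congr rfl (fun x hx => ?_)
      simp at hx
      exact h1 x hx.2 hx.1
    simp only [g]
    linarith
  have hTp : ∀ A B, f (T A B) p = g A := by
    intro A B
    refine hg _ (hTM A B) A (fun i => ?_)
    simp only [T]
    split_ifs with h1 h2
    · simp [h1]
    · simp [h1, hwp]
    · simp [h1, hrp]
  have hTw : ∀ A B, Disjoint A B → f (T A B) w = f (T ∅ B) w := by
    intro A B hAB
    refine F.conn (fun i => ?_)
    simp only [T, Finset.notMem_empty, if_false]
    by_cases hB : i ∈ B
    · have hA : i ∉ A := fun h => Finset.disjoint_left.mp hAB h hB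
      simp only [hA, hB, if_true, if_false]; exact Relation.ReflTransGen.refl
    · by_cases hA : i ∈ A
      · simp only [hA, hB, if_true, if_false]
        exact hcw r hr.1 hr.2 hrw
      · simp only [hA, hB, if_false]; exact Relation.ReflTransGen.refl
  have hadd : ∀ A B, Disjoint A B → g (A ∪ B) = g A + g B := by
    intro A B hAB
    have a := hmove A B hAB
    have b := hmove ∅ B (by simp)
    rw [hTp] at a b
    rw [hTw A B hAB] at a
    rw [hg0, Finset.empty_union] at b
    linarith
  have hsum : ∀ S : Finset (Fin n), g S = ∑ i ∈ S, g {i} := by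
    intro S
    induction S using Finset.induction_on with
    | empty => simpa using hg0
    | insert a S ha ih =>
      rw [Finset.sum_insert ha, Finset.insert_eq, hadd _ _ (by simpa using ha), ih]
  refine ⟨fun i => g {i}, fun i => F.nonneg _ _, ?_, ?_⟩
  · rw [← hsum, hgu]
  · intro t ht S hS
    rw [hg t ht S hS, hsum]

lemma Rule.main [DecidableEq V] (F : Rule n E f) (G : GData E Lo Hi p q s e) :
    ∃ ε : Fin n → ℝ, (∀ i, 0 ≤ ε i) ∧ ∑ i, ε i = 1 ∧
      ∀ (t : Fin n → V), (∀ i, ¬ Lo (t i) ∧ ¬ Hi (t i)) → ∀ a,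
        f t a = ∑ i ∈ Finset.univ.filter (fun i => t i = a), ε i := by
  obtain ⟨ε, h0, h1, hp⟩ := F.additive G
  obtain ⟨δ, d0, d1, hq'⟩ := F.additive G.mirror
  have hq : ∀ (t : Fin n → V), (∀ i, ¬ Lo (t i) ∧ ¬ Hi (t i)) → ∀ S : Finset (Fin n),
        (∀ i, i ∈ S ↔ t i = q) → f t q = ∑ i ∈ S, δ i :=
    fun t ht => hq' t (fun i => (ht i).symm)
  have hle : ∀ t, f t p + f t q ≤ 1 := by
    intro t
    rw [← F.sum t, ← Finset.sum_pair G.pq]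
    exact Finset.sum_le_sum_of_subset_of_nonneg (Finset.subset_univ _) (fun _ _ _ => F.nonneg _ _)
  have hle3 : ∀ t x, x ≠ p → x ≠ q → f t x + (f t p + f t q) ≤ 1 := by
    intro t x hx hx'
    rw [← F.sum t, ← Finset.sum_pair G.pq, ← Finset.sum_insert (by simp [hx, hx'])]
    exact Finset.sum_le_sum_of_subset_of_nonneg (Finset.subset_univ _) (fun _ _ _ => F.nonneg _ _)
  have hineq : ∀ S : Finset (Fin n), ∑ i ∈ S, ε i + ∑ i ∈ Sᶜ, δ i ≤ 1 := by
    intro S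
    have := hle (fun i => if i ∈ S then p else q)
    rw [hp _ ?_ S ?_, hq _ ?_ Sᶜ ?_] at this
    · exact this
    · intro i
      by_cases h : i ∈ S
      · simpa [h] using ⟨G.pl, G.ph⟩
      · simpa [h] using ⟨G.ql, G.qh⟩
    · intro i
      by_cases h : i ∈ S
      · simpa [h] using G.pq
      · simp [h]
    · intro i
      by_cases h : i ∈ S
      · simpa [h] using ⟨G.pl, G.ph⟩
      · simpa [h] using ⟨G.ql, G.qh⟩
    · intro i
      by_cases h : i ∈ S
      · simp [h]
      · simpa [h] using G.pq.symm
  have hεδ : ε = δ := by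
    funext i
    have a := hineq {i}
    have b := hineq {i}ᶜ
    have c := Finset.sum_add_sum_compl {i} ε
    have d := Finset.sum_add_sum_compl {i} δ
    simp only [compl_compl, Finset.sum_singleton] at a b c d
    linarith
  subst hεδ
  refine ⟨ε, h0, h1, ?_⟩
  intro t ht
  have hub : ∀ a, f t a ≤ ∑ i ∈ Finset.univ.filter (fun i => t i = a), ε i := by
    intro a
    by_cases hap : a = p
    · subst hap; exact (hp t ht _ (by simp)).le
    by_cases haq : a = q
    · subst haq; exact (hq t ht _ (by simp)).le
    classical
    let t' : Fin n → V := fun i => if t i = a then a else if Conn E a (t i) p then p else q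
    have e1 : f t' a = f t a := by
      refine F.conn (fun i => ?_)
      simp only [t']
      split_ifs with c1 c2
      · rw [c1]; exact Relation.ReflTransGen.refl
      · exact c2
      · exact (G.r1 (ht i).1 (ht i).2 c1).resolve_left c2
    have ht' : ∀ i, ¬ Lo (t' i) ∧ ¬ Hi (t' i) := by
      intro i
      simp only [t']
      split_ifs with c1
      · exact c1 ▸ ht i
      · exact ⟨G.pl, G.ph⟩
      · exact ⟨G.ql, G.qh⟩
    have e2 := hle3 t' a hap haq
    rw [hp t' ht' (Finset.univ.filter (fun i => t' i = p)) (by simp),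
      hq t' ht' (Finset.univ.filter (fun i => t' i = q)) (by simp), e1] at e2
    have e3 : (Finset.univ.filter (fun i => t i = a)) = (Finset.univ.filter (fun i => t' i = a)) := by
      ext i
      simp only [t', Finset.mem_filter, Finset.mem_univ, true_and]
      split_ifs with c1 c2
      · simp [c1]
      · simp [c1, Ne.symm hap]
      · simp [c1, Ne.symm haq]
    rw [e3]
    simp only [Finset.sum_filter] at e2 ⊢
    have e4 : ∑ i, (if t' i = a then ε i else 0) + (∑ i, (if t' i = p then ε i else 0)
        + ∑ i, (if t' i = q then ε i else 0)) = 1 := by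
      rw [← h1, ← Finset.sum_add_distrib, ← Finset.sum_add_distrib]
      refine Finset.sum_congr rfl (fun i _ => ?_)
      have hpq := G.pq
      simp only [t']
      split_ifs <;> simp_all
    linarith
  have hs : ∑ a, f t a = ∑ a, ∑ i ∈ Finset.univ.filter (fun i => t i = a), ε i := by
    rw [F.sum, ← h1]
    exact (Finset.sum_fiberwise _ _ _).symm
  intro a
  exact (Finset.sum_eq_sum_iff_of_le (fun i _ => hub i)).1 hs a (Finset.mem_univ _)

end rule
end RDProof

namespace RDProof
section sp
variable {m n : ℕ}

lemma topSum_succ (lam : Lottery m) (P : Pref m) (j : ℕ) (hj : j < m) :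
    topSum lam P (j + 1) = topSum lam P j + lam.1 (P ⟨j, hj⟩) := by
  unfold topSum
  have : (Finset.univ.filter (fun t : Fin m => (t : ℕ) < j + 1))
      = insert ⟨j, hj⟩ (Finset.univ.filter (fun t : Fin m => (t : ℕ) < j)) := by
    ext t
    simp only [Finset.mem_filter, Finset.mem_univ, true_and, Finset.mem_insert, Fin.ext_iff]
    omega
  rw [this, Finset.sum_insert (by simp)]
  ring

lemma topSum_swap (P P' : Pref m) (k : ℕ) (hk : k + 1 < m)
    (h1 : P ⟨k, Nat.lt_of_succ_lt hk⟩ = P' ⟨k + 1, hk⟩)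
    (h2 : P ⟨k + 1, hk⟩ = P' ⟨k, Nat.lt_of_succ_lt hk⟩)
    (h3 : ∀ l : Fin m, (l : ℕ) ≠ k → (l : ℕ) ≠ k + 1 → P l = P' l) (lam : Lottery m) :
    ∀ j, j ≤ m → j ≠ k + 1 → topSum lam P j = topSum lam P' j := by
  have low : ∀ j, j ≤ k → topSum lam P j = topSum lam P' j := by
    intro j hj
    unfold topSum
    refine Finset.sum_congr rfl (fun t ht => ?_)
    simp at ht
    rw [h3 t (by omega) (by omega)]
  have high : ∀ d, k + 2 + d ≤ m → topSum lam P (k + 2 + d) = topSum lam P' (k + 2 + d) := by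
    intro d
    induction d with
    | zero =>
      intro _
      rw [Nat.add_zero, topSum_succ _ _ (k + 1) hk, topSum_succ _ _ k (by omega),
        topSum_succ _ _ (k + 1) hk, topSum_succ _ _ k (by omega), h1, h2, low k le_rfl]
      ring
    | succ d ih =>
      intro hd
      rw [← Nat.add_assoc, topSum_succ _ _ _ (by omega), topSum_succ _ _ _ (by omega),
        ih (by omega), h3 _ (by simp only []; omega) (by simp only []; omega)]
  intro j hj hjk
  by_cases h : j ≤ k
  · exact low j h
  · obtain ⟨d, rfl⟩ := Nat.exists_eq_add_of_le (show k + 2 ≤ j by omega)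
    exact high d hj

lemma adj_data [NeZero m] {P P' : Pref m} (h : Adjacent P P') : ∃ u v : Fin m, u ≠ v ∧
    Prefers P u v ∧ Prefers P' v u ∧ (P 0 = P' 0 ∨ (P 0 = u ∧ P' 0 = v)) ∧
    ∀ lam lam' : Lottery m, (∀ k, k ≤ m → topSum lam' P k ≤ topSum lam P k) →
      (∀ k, k ≤ m → topSum lam P' k ≤ topSum lam' P' k) →
      ∀ z, z ≠ u → z ≠ v → lam.1 z = lam'.1 z := by
  obtain ⟨-, k, hk, h1, h2, h3⟩ := h
  refine ⟨P ⟨k, Nat.lt_of_succ_lt hk⟩, P ⟨k + 1, hk⟩, ?_, ?_, ?_, ?_, ?_⟩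
  · intro h
    have := P.injective h
    simp at this
  · unfold Prefers
    rw [Equiv.symm_apply_apply, Equiv.symm_apply_apply]
    simp
  · unfold Prefers
    rw [h1, h2, Equiv.symm_apply_apply, Equiv.symm_apply_apply]
    simp
  · by_cases hk0 : k = 0
    · right
      subst hk0
      constructor
      · rfl
      · rw [h2]; rfl
    · left
      exact h3 0 (by simp; omega) (by simp)
  · intro lam lam' hs hs' z hz hz'
    have heq : ∀ j, j ≤ m → j ≠ k + 1 → topSum lam P j = topSum lam' P j := by
      intro j hj hjk
      refine le_antisymm ?_ (hs j hj)
      rw [topSum_swap P P' k hk h1 h2 h3 lam j hj hjk, topSum_swap P P' k hk h1 h2 h3 lam' j hj hjk]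
      exact hs' j hj
    obtain ⟨l, rfl⟩ := P.surjective z
    have l1 : (l : ℕ) ≠ k := by
      rintro rfl
      exact hz rfl
    have l2 : (l : ℕ) ≠ k + 1 := by
      intro h
      apply hz'
      congr 1
      exact Fin.ext h
    have a := heq l l.2.le l2
    have b := heq (l + 1) l.2 (by omega)
    rw [topSum_succ _ _ _ l.2, topSum_succ _ _ _ l.2, a] at b
    exact add_left_cancel b

lemma prefers_asymm {P : Pref m} {a b : Fin m} (h : Prefers P a b) : ¬ Prefers P b a :=
  fun h' => lt_asymm h h'

lemma prefers_total (P : Pref m) {a b : Fin m} (h : a ≠ b) : Prefers P a b ∨ Prefers P b a := by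
  unfold Prefers
  rcases lt_trichotomy (P.symm a) (P.symm b) with h' | h' | h'
  · exact Or.inl h'
  · exact absurd (P.symm.injective h') h
  · exact Or.inr h'

lemma prefers_top [NeZero m] (P : Pref m) {x : Fin m} (h : x ≠ P 0) : Prefers P (P 0) x := by
  unfold Prefers
  rw [Equiv.symm_apply_apply]
  refine Fin.pos_iff_ne_zero.mpr (fun h' => h ?_)
  rw [← h', Equiv.apply_symm_apply]

variable {D : Set (Pref m)}

/-- adjacency inside a half space -/
def HS (D : Set (Pref m)) (x y : Fin m) (Q Q' : D) : Prop :=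
  Adjacent Q.1 Q'.1 ∧ Prefers Q.1 x y ∧ Prefers Q'.1 x y

lemma half_path (hD : NoRestorationDomain D) (P P' : D) (x y : Fin m)
    (h : Prefers P.1 x y) (h' : Prefers P'.1 x y) :
    Relation.ReflTransGen (HS D x y) P P' := by
  by_cases hne : P.1 = P'.1
  · rw [Subtype.ext hne]
  obtain ⟨π, v, ⟨hv, hmem, -, h0, hl, hadj⟩, hnr⟩ := hD P.1 P.2 P'.1 P'.2 hne x y
  have hxy : x ≠ y := by
    rintro rfl
    exact lt_irrefl _ h
  have hside : ∀ j, j < v → Prefers (π j) x y := by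
    intro j hj
    by_cases hj0 : j = 0
    · subst hj0; rwa [h0]
    by_cases hjl : j = v - 1
    · subst hjl; rwa [hl]
    refine (prefers_total _ hxy).resolve_right (fun hc => ?_)
    exact (hnr 0 j (v - 1) (by omega) (by omega) (by omega)).1 ⟨by rwa [h0], hc, by rwa [hl]⟩
  have key : ∀ j (hj : j < v), Relation.ReflTransGen (HS D x y) P ⟨π j, hmem j hj⟩ := by
    intro j
    induction j with
    | zero =>
      intro hj
      have : (⟨π 0, hmem 0 hj⟩ : D) = P := Subtype.ext h0
      rw [this]
    | succ j ih =>
      intro hj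
      exact (ih (by omega)).tail ⟨hadj j hj, hside j (by omega), hside (j + 1) hj⟩
  have := key (v - 1) (by omega)
  have e : (⟨π (v - 1), hmem (v - 1) (by omega)⟩ : D) = P' := Subtype.ext hl
  rwa [e] at this

variable {φ : Profile D n → Lottery m}

lemma sp_pair (hsp : StrategyProof φ) (R : Profile D n) (i : Fin n) (P P' : D) (k : ℕ) (hk : k ≤ m) :
    topSum (φ (Function.update R i P')) P.1 k ≤ topSum (φ (Function.update R i P)) P.1 k := by
  have := hsp i (Function.update R i P) P' k hk
  simpa using this

variable [NeZero m]

/-- Only the two swapped alternatives are affected. -/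
lemma adj_move (hsp : StrategyProof φ) {P P' : D} (h : Adjacent P.1 P'.1) :
    ∃ u v : Fin m, u ≠ v ∧
    Prefers P.1 u v ∧ Prefers P'.1 v u ∧ (P.1 0 = P'.1 0 ∨ (P.1 0 = u ∧ P'.1 0 = v)) ∧
    ∀ (R : Profile D n) (i : Fin n) (z : Fin m), z ≠ u → z ≠ v →
      (φ (Function.update R i P)).1 z = (φ (Function.update R i P')).1 z := by
  obtain ⟨u, v, huv, h1, h2, h3, h4⟩ := adj_data h
  refine ⟨u, v, huv, h1, h2, h3, fun R i => h4 _ _ ?_ ?_⟩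
  · exact fun k hk => sp_pair hsp R i P P' k hk
  · exact fun k hk => sp_pair hsp R i P' P k hk

lemma lot_eq_of_two (l l' : Lottery m) (u v : Fin m) (huv : u ≠ v)
    (h : ∀ z, z ≠ u → z ≠ v → l.1 z = l'.1 z) (hw : l.1 u = l'.1 u ∨ l.1 v = l'.1 v) :
    l = l' := by
  have e1 := l.2.2
  have e2 := l'.2.2
  have hsplit : ∀ t : Fin m → ℝ, ∑ x, t x
      = t u + (t v + ∑ x ∈ (Finset.univ.erase u).erase v, t x) := by
    intro t
    rw [Finset.add_sum_erase _ _ (by simp [huv.symm]), Finset.add_sum_erase _ _ (by simp)]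
  rw [hsplit] at e1 e2
  have h3 : ∑ x ∈ (Finset.univ.erase u).erase v, l.1 x
      = ∑ x ∈ (Finset.univ.erase u).erase v, l'.1 x := by
    refine Finset.sum_congr rfl (fun x hx => ?_)
    simp at hx
    exact h x hx.2 hx.1
  apply Subtype.ext
  funext z
  by_cases hzu : z = u
  · subst hzu
    rcases hw with hw | hw
    · exact hw
    · linarith
  by_cases hzv : z = v
  · subst hzv
    rcases hw with hw | hw
    · linarith
    · exact hw
  exact h z hzu hzv

lemma tops_adj (hD : NoRestorationDomain D) (hu : Unanimous φ) (hsp : StrategyProof φ)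
    {P P' : D} (h : Adjacent P.1 P'.1) (ht : P.1 0 = P'.1 0) (R : Profile D n) (i : Fin n) :
    φ (Function.update R i P) = φ (Function.update R i P') := by
  classical
  obtain ⟨x, y, hxy, hP, hP', -, hmove⟩ := adj_move (n := n) hsp h
  let R0 : Profile D n := fun j => if Prefers (R j).1 x y then P else P'
  let r : D → D → Prop := fun Q Q' => Relation.ReflTransGen (HS D x y) Q Q' ∨
    Relation.ReflTransGen (HS D y x) Q Q'
  refine transport r (fun R => φ (Function.update R i P) = φ (Function.update R i P')) ?_ R0 R ?_ ?_
  · intro R j Q hQ hI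
    by_cases hji : j = i
    · subst hji; simpa using hI
    have step : ∀ (S : Profile D n) (Q' : D), (HS D x y (S j) Q' ∨ HS D y x (S j) Q') →
        φ (Function.update S i P) = φ (Function.update S i P') →
        φ (Function.update (Function.update S j Q') i P)
          = φ (Function.update (Function.update S j Q') i P') := by
      intro S Q' hs hI
      have hadj : Adjacent (S j).1 Q'.1 := by rcases hs with hs | hs <;> exact hs.1
      obtain ⟨u, v, huv, h1, h2, -, h4⟩ := adj_move (n := n) hsp hadj
      have hmv : ∀ (T : D) z, z ≠ u → z ≠ v →
          (φ (Function.update (Function.update S j Q') i T)).1 z = (φ (Function.update S i T)).1 z := by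
        intro T z hz hz'
        have := h4 (Function.update S i T) j z hz hz'
        rw [Function.update_comm hji, ← this]
        have e : Function.update (Function.update S i T) j (S j) = Function.update S i T := by
          funext a
          by_cases ha : a = j
          · subst ha; simp [hji]
          · simp [ha]
        rw [e]
      have hout : (x ≠ u ∧ x ≠ v) ∨ (y ≠ u ∧ y ≠ v) := by
        by_contra hcon
        have : (u = x ∧ v = y) ∨ (u = y ∧ v = x) := by
          by_cases a : x = u <;> by_cases b : x = v <;> by_cases c : y = u <;>
            by_cases d : y = v <;> simp_all
        rcases this with ⟨rfl, rfl⟩ | ⟨rfl, rfl⟩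
        · rcases hs with hs | hs
          · exact prefers_asymm hs.2.2 h2
          · exact prefers_asymm hs.2.1 h1
        · rcases hs with hs | hs
          · exact prefers_asymm hs.2.1 h1
          · exact prefers_asymm hs.2.2 h2
      refine lot_eq_of_two _ _ x y hxy (hmove _ i) ?_
      rcases hout with hout | hout
      · left; rw [hmv _ _ hout.1 hout.2, hmv _ _ hout.1 hout.2, hI]
      · right; rw [hmv _ _ hout.1 hout.2, hmv _ _ hout.1 hout.2, hI]
    have chain : ∀ (rel : D → D → Prop), (∀ a b, rel a b → HS D x y a b ∨ HS D y x a b) →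
        Relation.ReflTransGen rel (R j) Q → φ (Function.update (Function.update R j Q) i P)
          = φ (Function.update (Function.update R j Q) i P') := by
      intro rel hrel hc
      clear hQ
      induction hc with
      | refl => simpa using hI
      | @tail b c _ hbc ih =>
        have := step (Function.update R j b) c (by simpa using hrel _ _ hbc) ih
        simpa using this
    rcases hQ with hQ | hQ
    · exact chain _ (fun a b h => Or.inl h) hQ
    · exact chain _ (fun a b h => Or.inr h) hQ
  · intro j
    simp only [R0]
    split_ifs with hj
    · exact Or.inl (half_path hD _ _ x y hP hj)
    · exact Or.inr (half_path hD _ _ y x hP' ((prefers_total _ hxy).resolve_left hj))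
  · have hR0 : ∀ j, topOf (R0 j) = P.1 0 := by
      intro j
      simp only [R0, topOf]
      split_ifs
      · rfl
      · exact ht.symm
    rw [hu (Function.update R0 i P) (P.1 0), hu (Function.update R0 i P') (P.1 0)]
    · intro j
      by_cases hj : j = i
      · subst hj; simp [topOf, ht]
      · simpa [hj] using hR0 j
    · intro j
      by_cases hj : j = i
      · subst hj; simp [topOf]
      · simpa [hj] using hR0 j

lemma tops_one (hD : NoRestorationDomain D) (hu : Unanimous φ) (hsp : StrategyProof φ)
    {P P' : D} (ht : P.1 0 = P'.1 0) (R : Profile D n) (i : Fin n) :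
    φ (Function.update R i P) = φ (Function.update R i P') := by
  have key : ∀ x, x ≠ P.1 0 → (φ (Function.update R i P)).1 x = (φ (Function.update R i P')).1 x := by
    intro x hx
    have hpath := half_path hD P P' (P.1 0) x (prefers_top _ hx) (ht ▸ prefers_top _ (ht ▸ hx))
    clear ht
    induction hpath with
    | refl => rfl
    | @tail b c _ hbc ih => 
      rw [ih]
      by_cases htop : b.1 0 = c.1 0
      · rw [tops_adj hD hu hsp hbc.1 htop]
      · obtain ⟨u, v, huv, -, -, h3, h4⟩ := adj_move (n := n) hsp hbc.1
        obtain ⟨h5, h6⟩ := h3.resolve_left htop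
        have nt : ∀ Q : Pref m, Prefers Q (P.1 0) x → x ≠ Q 0 := by
          rintro Q hQ rfl
          unfold Prefers at hQ
          rw [Equiv.symm_apply_apply] at hQ
          exact absurd hQ (Fin.not_lt_zero _)
        exact h4 R i x (h5 ▸ nt _ hbc.2.1) (h6 ▸ nt _ hbc.2.2)
  apply Subtype.ext
  funext z
  by_cases hz : z = P.1 0
  · have e1 := (φ (Function.update R i P)).2.2
    have e2 := (φ (Function.update R i P')).2.2
    rw [← Finset.add_sum_erase _ _ (Finset.mem_univ z)] at e1 e2
    have : ∑ x ∈ Finset.univ.erase z, (φ (Function.update R i P)).1 x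
        = ∑ x ∈ Finset.univ.erase z, (φ (Function.update R i P')).1 x := by
      refine Finset.sum_congr rfl (fun x hx => key x ?_)
      simp at hx
      rwa [← hz]
    linarith
  · exact key z hz

lemma tops_only (hD : NoRestorationDomain D) (hu : Unanimous φ) (hsp : StrategyProof φ)
    (R R' : Profile D n) (h : ∀ i, topOf (R i) = topOf (R' i)) : φ R = φ R' := by
  refine (transport (fun Q Q' : D => topOf Q = topOf Q') (fun S => φ R = φ S) ?_ R R' h rfl)
  intro S i b hb hI
  rw [hI]
  have := tops_one hD hu hsp hb S i
  simpa using this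

end sp

lemma sc_symm {m : ℕ} [NeZero m] {D : Set (Pref m)} (a b : Fin m) (h : StronglyConnected D a b) :
    StronglyConnected D b a := by
  obtain ⟨hne, P, hP, P', hP', h1, h2, h3, h4, h5⟩ := h
  exact ⟨hne.symm, P', hP', P, hP, h3, h4, h1, h2, fun k hk => (h5 k hk).symm⟩

lemma sc_adj {m : ℕ} [NeZero m] (hm : 3 ≤ m) {D : Set (Pref m)} {a b : Fin m}
    (h : StronglyConnected D a b) :
    ∃ P P' : D, P.1 0 = a ∧ P'.1 0 = b ∧ Adjacent P.1 P'.1 := by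
  obtain ⟨hne, P, hP, P', hP', h1, h2, h3, h4, h5⟩ := h
  have e1 : (⟨0 + 1, by omega⟩ : Fin m) = 1 := by
    apply Fin.ext
    obtain ⟨k, rfl⟩ : ∃ k, m = k + 2 := ⟨m - 2, by omega⟩
    simp
  have e0 : (⟨0, by omega⟩ : Fin m) = 0 := rfl
  refine ⟨⟨P, hP⟩, ⟨P', hP'⟩, h1, h3, ?_, 0, by omega, ?_, ?_, ?_⟩
  · intro h
    simp only at h
    subst h
    exact hne (h1.symm.trans h3)
  · rw [e1]; exact h1.trans h4.symm
  · rw [e1]; exact h2.trans h3.symm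
  · intro l hl hl'
    exact h5 l (by omega)

lemma second {m : ℕ} [NeZero m] (hm : 3 ≤ m) (P : Pref m) {c : Fin m} (h : Prefers P c (P 1)) :
    c = P 0 := by
  unfold Prefers at h
  rw [Equiv.symm_apply_apply] at h
  have hv : ((1 : Fin m) : ℕ) = 1 := by
    obtain ⟨k, rfl⟩ : ∃ k, m = k + 2 := ⟨m - 2, by omega⟩
    simp
  have : P.symm c = 0 := by
    apply Fin.ext
    have := Fin.lt_def.mp h
    rw [Fin.val_zero]
    omega
  rw [← this, Equiv.apply_symm_apply]

lemma hyb_lo {m : ℕ} [NeZero m] (hm : 3 ≤ m) {D : Set (Pref m)} {p q a b : Fin m} (hpq : p < q)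
    (hD : D ⊆ hybridDomain p q) (h : StronglyConnected D a b) (ha : a < p) : b ≤ p := by
  obtain ⟨hne, P, hP, P', hP', rfl, rfl, -⟩ := h
  obtain ⟨h1, h2, h3⟩ := hD hP
  by_contra hb
  push Not at hb
  have key : Prefers P p (P 1) := by
    by_cases hq : P 1 ≤ q
    · exact h2 ha.le _ hb.le hq hb.ne'
    · push Not at hq
      exact lt_trans (h2 ha.le q hpq.le le_rfl hpq.ne')
        (h1 (P 1) q (Or.inr ⟨hq.le, le_rfl⟩) (Or.inr ⟨ha.trans hpq, hq⟩))
  exact ha.ne (second hm P key).symm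

lemma hyb_hi {m : ℕ} [NeZero m] (hm : 3 ≤ m) {D : Set (Pref m)} {p q a b : Fin m} (hpq : p < q)
    (hD : D ⊆ hybridDomain p q) (h : StronglyConnected D a b) (ha : q < a) : q ≤ b := by
  obtain ⟨hne, P, hP, P', hP', rfl, rfl, -⟩ := h
  obtain ⟨h1, h2, h3⟩ := hD hP
  by_contra hb
  push Not at hb
  have key : Prefers P q (P 1) := by
    by_cases hq : p ≤ P 1
    · exact h3 ha.le _ hq hb.le hb.ne
    · push Not at hq
      exact lt_trans (h3 ha.le p le_rfl hpq.le hpq.ne)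
        (h1 (P 1) p (Or.inl ⟨hq.le, le_rfl⟩) (Or.inl ⟨hq, hpq.trans ha⟩))
  exact ha.ne (second hm P key)

end RDProof

/-- On a regular `(p,q)`-hybrid* domain with `q - p > 1`, every unanimous
and strategy-proof RSCF behaves like a random dictatorship on the profiles whose tops all
lie in `M`. -/
theorem random_dictatorship_on_middle (m n : ℕ) [NeZero m] (hm : 3 ≤ m) (hn : 2 ≤ n)
    (D : Set (Pref m)) (p q : Fin m) (hgap : (p : ℕ) + 1 < (q : ℕ))
    (hreg : RegularDomain D) (hstar : IsHybridStar D p q)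
    (φ : Profile D n → Lottery m) (hu : Unanimous φ) (hsp : StrategyProof φ) :
    ∃ ε : Fin n → ℝ, (∀ i, 0 ≤ ε i) ∧ ∑ i, ε i = 1 ∧
      ∀ P : Profile D n, (∀ i, p ≤ topOf (P i) ∧ topOf (P i) ≤ q) →
        ∀ a : Fin m,
          (φ P).1 a = ∑ i ∈ Finset.univ.filter (fun i => topOf (P i) = a), ε i := by
  classical
  have hpq : p < q := Fin.lt_def.mpr (by omega)
  obtain ⟨hrich, -, hD⟩ := hreg
  obtain ⟨hsub, hpath, hleaf⟩ := hstar
  have hleaf := hleaf hgap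
  choose pr hpr using hrich
  let c : Fin m → D := fun a => ⟨pr a, (hpr a).1⟩
  have hc : ∀ a, topOf (c a) = a := fun a => (hpr a).2
  let f : (Fin n → Fin m) → Fin m → ℝ := fun t x => (φ (fun i => c (t i))).1 x
  have F : RDProof.Rule n (StronglyConnected D) f := by
    refine ⟨fun t x => (φ _).2.1 x, fun t => (φ _).2.2, ?_, ?_, ?_⟩
    · intro a
      simp only [f]
      rw [hu (fun _ => c a) a (fun _ => hc a)]
      simp [degLottery]
    · intro a x hx
      simp only [f]
      rw [hu (fun _ => c a) a (fun _ => hc a)]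
      simp [degLottery, hx]
    · intro t i b z hE hz hz'
      obtain ⟨P, P', h0, h0', hadj⟩ := RDProof.sc_adj hm hE
      obtain ⟨u, v, -, -, -, h3, h4⟩ := RDProof.adj_move (n := n) hsp hadj
      have hne := hE.1
      rw [h0, h0'] at h3
      obtain ⟨rfl, rfl⟩ := h3.resolve_left hne
      have := h4 (fun j => c (t j)) i z hz hz'
      simp only [f]
      have e1 : φ (fun j => c (t j)) = φ (Function.update (fun j => c (t j)) i P) := by
        refine RDProof.tops_only hD hu hsp _ _ (fun j => ?_)
        by_cases hj : j = i
        · subst hj; simp [hc]; exact h0.symm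
        · simp [hj]
      have e2 : φ (fun j => c (Function.update t i b j))
          = φ (Function.update (fun j => c (t j)) i P') := by
        refine RDProof.tops_only hD hu hsp _ _ (fun j => ?_)
        by_cases hj : j = i
        · subst hj; simp [hc]; exact h0'.symm
        · simp [hj]
      rw [e1, e2, this]
  have hM : ∀ b : Fin m, (¬ b < p ∧ ¬ q < b) ↔ b ∈ Set.Icc p q := by
    intro b; simp
  let r : Fin m := ⟨p + 1, by omega⟩
  have hr0 : r ≠ 0 := by
    intro h
    have := congrArg Fin.val h
    simp [r] at this
  have hrl : r ≠ lastAlt m := by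
    intro h
    have := congrArg Fin.val h
    simp only [r, lastAlt] at this
    omega
  have hpath' : ∀ k : Fin m, ∃ l : List (Fin m), l.Nodup ∧ l.IsChain (StronglyConnected D) ∧
      l.head? = some 0 ∧ l.getLast? = some (lastAlt m) ∧ k ∈ l := by
    intro k
    by_cases hk : k ≠ 0 ∧ k ≠ lastAlt m
    · obtain ⟨l, ⟨⟨-, h2, -, h4⟩, h5, h6⟩, h7⟩ := hpath k hk.1 hk.2
      exact ⟨l, h2, h4, h5, h6, h7⟩
    · obtain ⟨l, ⟨⟨-, h2, -, h4⟩, h5, h6⟩, h7⟩ := hpath r hr0 hrl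
      refine ⟨l, h2, h4, h5, h6, ?_⟩
      by_cases hk0 : k = 0
      · rw [hk0]; exact List.mem_of_mem_head? (by rw [h5]; rfl)
      · have : k = lastAlt m := by
          by_contra h
          exact hk ⟨hk0, h⟩
        rw [this]; exact List.mem_of_mem_getLast? (by rw [h6]; rfl)
  have G : RDProof.GData (StronglyConnected D) (fun z => z < p) (fun z => q < z) p q 0
      (lastAlt m) :=
    { sym := RDProof.sc_symm
      irr := fun a b h => h.1
      lo := fun a b h ha => (RDProof.hyb_lo hm hpq hsub h ha).lt_or_eq
      hi := fun a b h ha => (RDProof.hyb_hi hm hpq hsub h ha).lt_or_eq.imp id Eq.symm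
      pl := lt_irrefl _
      ph := hpq.not_gt
      ql := hpq.not_gt
      qh := lt_irrefl _
      hs := (Fin.zero_le p).lt_or_eq
      he := by
        have : q ≤ lastAlt m := by
          rw [Fin.le_def]
          simp only [lastAlt]
          omega
        exact this.lt_or_eq.imp id Eq.symm
      pq := hpq.ne
      path := fun k _ _ => hpath' k
      third := by
        refine ⟨r, ?_, ?_, ?_, ?_⟩
        · simp only [r, Fin.lt_def]; omega
        · simp only [r, Fin.lt_def]; omega
        · simp only [r, ne_eq, Fin.ext_iff]; omega
        · simp only [r, ne_eq, Fin.ext_iff]; omega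
      leafp := by
        intro h
        simp only [hM] at h
        exact hleaf p ⟨⟨le_rfl, hpq.le⟩, h⟩
      leafq := by
        intro h
        simp only [hM] at h
        exact hleaf q ⟨⟨hpq.le, le_rfl⟩, h⟩ }
  obtain ⟨ε, h0, h1, h2⟩ := F.main G
  refine ⟨ε, h0, h1, fun P hP a => ?_⟩
  have e : φ P = φ (fun i => c (topOf (P i))) :=
    RDProof.tops_only hD hu hsp _ _ (fun i => (hc _).symm)
  rw [e]
  exact h2 (fun i => topOf (P i)) (fun i => (hM _).2 (hP i)) a
end
end
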